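/- arXiv:1812.07144 — 2 statements merged into one kernel-verified Lean document; each statement's English description precedes it below -/
import Mathlib

section
/- Fix λ > 0, δ₀, δ₂ ≥ 0 with δ₀ + δ₂ < λ/4, and δ₁ ∈ (0,1). There exist constants K̄₀ ∈ (0, 1/10] and r̄₁ ∈ (0, δ₁], depending only on λ, δ₀, δ₂, such that for every K₀ > 0 and a₀ > 0 the following holds. There exist C̄ ≥ 1 (depending only on λ, δ₀, δ₂ and not on K₀), m₀ = m₀(K₀) ∈ ℕ, and r̄₀ = r̄₀(K₀, m₀) > 0, and for each r₀ ∈ (0, r̄₀] an integer m₁ (depending on r₀, K₀, a₀), such that: for every hyperbolic chart sequence (f̃_k, ℓ_k)_{k≥0} with data (λ, δ₀, δ₁) and every C^{1+Lip} map g : B^u(r₀ ℓ₀^{-1}) → ℝ^{cs} with g(0) = 0, Lip(g) ≤ K₀ and Lip(dg) ≤ a₀, the graph-transform sequence (g_k) of g with radii d_k = r₀ for k ≤ m₀ and d_k = r̄₁ for k > m₀ is well defined, and for every k ≥ m₀ + m₁: g_k is defined on all of B^u(r̄₁ ℓ_k^{-1}) and is C^{1+Lip}, Lip(g_k) ≤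 K̄₀, |(dg_k)₀| ≤ e^{-kλ/2} |(dg)₀|, and Lip(dg_k) ≤ C̄ ℓ_k. -/
open Metric Set

noncomputable section

/-- The unstable factor `ℝ^u` with the Euclidean norm. -/
abbrev EuSp (du : ℕ) := EuclideanSpace ℝ (Fin du)

/-- The center-stable factor `ℝ^{cs}` with the Euclidean norm. -/
abbrev CsSp (dcs : ℕ) := EuclideanSpace ℝ (Fin dcs)

/-- The product `ℝ^u × ℝ^{cs}`, carrying the norm `‖(u,v)‖ = max (‖u‖, ‖v‖)`. -/
abbrev PSp (du dcs : ℕ) := EuSp du × CsSp dcs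

/-- The graph of `g : ℝ^u → ℝ^{cs}` over the closed ball `B^u(r)`. -/
def uGraph (du dcs : ℕ) (r : ℝ) (g : EuSp du → CsSp dcs) : Set (PSp du dcs) :=
  {p | p.1 ∈ closedBall (0 : EuSp du) r ∧ p.2 = g p.1}

/-- `f` (with derivative field `Df`) is a hyperbolic chart map with data `(lam, δ0, ℓ, δ)`:
it fixes `0`; it is `C^{1+Lip}` on `B(δ ℓ⁻¹)` with `Lip(df) ≤ ℓ`; its derivative at `0`
preserves the splitting `ℝ^u ⊕ ℝ^{cs}`, expanding the unstable factor by at least `e^lam`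
and contracting/expanding the center-stable factor by at most `e^{δ0}`; and the
nonlinear part `f - (df)₀` has Lipschitz constant `≤ δ'` on `B(δ' ℓ⁻¹)` for all
`δ' ∈ (0, δ]`. -/
structure IsChartMap (du dcs : ℕ) (lam δ0 ℓ δ : ℝ)
    (f : PSp du dcs → PSp du dcs)
    (Df : PSp du dcs → (PSp du dcs →L[ℝ] PSp du dcs)) : Prop where
  map_zero : f 0 = 0
  hasDeriv : ∀ z ∈ closedBall (0 : PSp du dcs) (δ / ℓ),
      HasFDerivWithinAt f (Df z) (closedBall (0 : PSp du dcs) (δ / ℓ)) z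
  lipDeriv : LipschitzOnWith ℓ.toNNReal Df (closedBall (0 : PSp du dcs) (δ / ℓ))
  deriv_zero_mapsU : ∀ u : EuSp du, (Df 0 (u, 0)).2 = 0
  deriv_zero_mapsCs : ∀ v : CsSp dcs, (Df 0 (0, v)).1 = 0
  expand : ∀ u : EuSp du, Real.exp lam * ‖u‖ ≤ ‖Df 0 (u, 0)‖
  contract : ∀ v : CsSp dcs, ‖Df 0 (0, v)‖ ≤ Real.exp δ0 * ‖v‖
  lip_nonlinear : ∀ δ' : ℝ, 0 < δ' → δ' ≤ δ →
      LipschitzOnWith δ'.toNNReal (fun z => f z - Df 0 z)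
        (closedBall (0 : PSp du dcs) (δ' / ℓ))

/-- `g` (with derivative field `Dg`) is `C^{1+Lip}` on the ball `B^u(r)`, with Lipschitz
constant `≤ K` and with `Lip(dg) ≤ a`. -/
structure IsC1LipGraph (du dcs : ℕ) (r K a : ℝ)
    (g : EuSp du → CsSp dcs) (Dg : EuSp du → (EuSp du →L[ℝ] CsSp dcs)) : Prop where
  hasDeriv : ∀ u ∈ closedBall (0 : EuSp du) r,
      HasFDerivWithinAt g (Dg u) (closedBall (0 : EuSp du) r) u
  lip : LipschitzOnWith K.toNNReal g (closedBall (0 : EuSp du) r)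
  lipDeriv : LipschitzOnWith a.toNNReal Dg (closedBall (0 : EuSp du) r)

/-!
On a small ball a hyperbolic chart is a perturbation of its block diagonal derivative at `0`. It
therefore maps cones around the unstable factor into narrower ones, contracting slopes by
`κ = e^{-λ/2}` up to a small error, and expands the unstable factor by `c = e^{3λ/4}`. At `0` there
is no error, which gives the decay `e^{-kλ/2}` of the slope there.

The ball on which the perturbation is small compared with a slope `K₀` has radius of order `1 / K₀`.
The first `m₀` steps therefore use a small radius `r₀` and only flatten the graph to slope `1/10`.
From then on a radius `r̄₁` independent of `K₀` is small enough, and because the scales vary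
slowly the domain, measured in units of `1 / ℓ_k`, grows by the factor `κ⁻¹` in each step until it
is the whole ball of radius `r̄₁ / ℓ_k`. The ratio `b_k = Lip(dg_k) / ℓ_k` satisfies
`b_{k+1} ≤ κ b_k + C`, where `C` depends only on the bound on the slopes, so it ends up below a
constant that does not depend on `g`.
-/

section

variable {E V : Type*} [NormedAddCommGroup E]

/-- The graph of `g` over the closed `r`-ball. -/
def graphOver (r : ℝ) (g : E → V) : Set (E × V) :=
  {p | p.1 ∈ closedBall 0 r ∧ p.2 = g p.1}

lemma mk_mem_graphOver {r : ℝ} {g : E → V} {u : E} (hu : u ∈ closedBall 0 r) :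
    (u, g u) ∈ graphOver r g :=
  ⟨hu, rfl⟩

variable [NormedAddCommGroup V]

/-- The cone of slope `K` around the unstable factor, the set where graph directions of
`K`-Lipschitz maps `E → V` live. -/
def unstableCone (K : ℝ) : Set (E × V) :=
  {x | ‖x.2‖ ≤ K * ‖x.1‖}

lemma norm_le_of_mem_unstableCone {K M : ℝ} (hM : 1 ≤ M) (hKM : K ≤ M) {x : E × V}
    (hx : x ∈ unstableCone K) : ‖x‖ ≤ M * ‖x.1‖ :=
  max_le (le_mul_of_one_le_left (norm_nonneg _) hM)
    (hx.trans (mul_le_mul_of_nonneg_right hKM (norm_nonneg _)))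

variable [NormedSpace ℝ E] [NormedSpace ℝ V]

lemma isInvertible_of_le_norm [FiniteDimensional ℝ E] {P : E →L[ℝ] E} {c : ℝ} (hc : 0 < c)
    (hP : ∀ w, c * ‖w‖ ≤ ‖P w‖) : P.IsInvertible := by
  have hinj : Function.Injective P.toLinearMap := by
    refine (injective_iff_map_eq_zero _).2 fun w hw ↦ norm_le_zero_iff.1 ?_
    have := hP w
    rw [show P w = 0 from hw, norm_zero] at this
    exact nonpos_of_mul_nonpos_right this hc
  exact ⟨(LinearEquiv.ofInjectiveEndo P.toLinearMap hinj).toContinuousLinearEquiv, by ext; rfl⟩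

lemma surjOn_closedBall_of_norm_sub_sub_le [CompleteSpace E] {A : E →L[ℝ] E} {f : E → E}
    {μ ε R : ℝ} (hinv : A.IsInvertible) (hμ : 0 < μ) (hA : ∀ w, μ * ‖w‖ ≤ ‖A w‖) (hε : 0 ≤ ε)
    (hR : 0 ≤ R) (hf0 : f 0 = 0)
    (hf : ∀ x ∈ closedBall (0 : E) R, ∀ y ∈ closedBall (0 : E) R,
      ‖f x - f y - A (x - y)‖ ≤ ε * ‖x - y‖) :
    SurjOn f (closedBall 0 R) (closedBall 0 ((μ - ε) * R)) := by
  have happrox : ApproximatesLinearOn f A (closedBall 0 R) ε.toNNReal := fun x hx y hy ↦ by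
    simpa only [Real.coe_toNNReal _ hε] using hf x hx y hy
  let Ainv : A.NonlinearRightInverse :=
    { toFun := A.inverse
      nnnorm := μ⁻¹.toNNReal
      bound' := fun y ↦ by
        rw [Real.coe_toNNReal _ (by positivity), le_inv_mul_iff₀ hμ]
        simpa only [hinv.self_apply_inverse] using hA (A.inverse y)
      right_inv' := hinv.self_apply_inverse }
  have hnorm : (Ainv.nnnorm : ℝ)⁻¹ = μ := by
    rw [show Ainv.nnnorm = μ⁻¹.toNNReal from rfl, Real.coe_toNNReal _ (by positivity), inv_inv]
  simpa only [hnorm, hf0, Real.coe_toNNReal _ hε] using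
    happrox.surjOn_closedBall_of_nonlinearRightInverse Ainv hR subset_rfl

/-- The slope of the image of `T : E → E × V`: if the first component of `T` is invertible, this is
the operator whose graph is the range of `T` (otherwise it is a junk value). -/
def tangentSlope (T : E →L[ℝ] E × V) : E →L[ℝ] V :=
  (ContinuousLinearMap.snd ℝ E V ∘L T) ∘L (ContinuousLinearMap.fst ℝ E V ∘L T).inverse

section

variable {T T₁ T₂ : E →L[ℝ] E × V}

lemma tangentSlope_apply_fst (hT : (ContinuousLinearMap.fst ℝ E V ∘L T).IsInvertible) (w : E) :
    tangentSlope T (T w).1 = (T w).2 :=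
  congrArg (fun x ↦ (T x).2) (hT.inverse_apply_self w)

lemma norm_tangentSlope_le (hT : (ContinuousLinearMap.fst ℝ E V ∘L T).IsInvertible) {K : ℝ}
    (hK : 0 ≤ K) (hcone : ∀ w, ‖(T w).2‖ ≤ K * ‖(T w).1‖) : ‖tangentSlope T‖ ≤ K := by
  refine ContinuousLinearMap.opNorm_le_bound _ hK fun y ↦ ?_
  obtain ⟨w, rfl⟩ := hT.surjective y
  exact (congrArg norm (tangentSlope_apply_fst hT w)).trans_le (hcone w)

lemma norm_tangentSlope_sub_le (hT₁ : (ContinuousLinearMap.fst ℝ E V ∘L T₁).IsInvertible)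
    (hT₂ : (ContinuousLinearMap.fst ℝ E V ∘L T₂).IsInvertible) {c K α β : ℝ} (hc : 0 < c)
    (hα : 0 ≤ α) (hβ : 0 ≤ β) (hK : ‖tangentSlope T₂‖ ≤ K) (hexp : ∀ w, c * ‖w‖ ≤ ‖(T₁ w).1‖)
    (hfst : ∀ w, ‖(T₁ w - T₂ w).1‖ ≤ α * ‖w‖) (hsnd : ∀ w, ‖(T₁ w - T₂ w).2‖ ≤ β * ‖w‖) :
    ‖tangentSlope T₁ - tangentSlope T₂‖ ≤ (β + K * α) / c := by
  have hK0 : 0 ≤ K := (norm_nonneg _).trans hK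
  refine ContinuousLinearMap.opNorm_le_bound _ (by positivity) fun y ↦ ?_
  obtain ⟨w, rfl⟩ := hT₁.surjective y
  have hdiff : (tangentSlope T₁ - tangentSlope T₂) (T₁ w).1 =
      (T₁ w - T₂ w).2 - tangentSlope T₂ (T₁ w - T₂ w).1 := by
    rw [sub_apply, tangentSlope_apply_fst hT₁, Prod.fst_sub, map_sub, tangentSlope_apply_fst hT₂,
      Prod.snd_sub]
    abel
  calc ‖(tangentSlope T₁ - tangentSlope T₂) (T₁ w).1‖
      ≤ ‖(T₁ w - T₂ w).2‖ + ‖tangentSlope T₂ (T₁ w - T₂ w).1‖ := hdiff ▸ norm_sub_le _ _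
    _ ≤ β * ‖w‖ + K * (α * ‖w‖) := by
        gcongr
        · exact hsnd w
        · exact ((tangentSlope T₂).le_of_opNorm_le hK _).trans (by gcongr; exact hfst w)
    _ = (β + K * α) / c * (c * ‖w‖) := by field_simp
    _ ≤ (β + K * α) / c * ‖(T₁ w).1‖ := by gcongr; exact hexp w

lemma hasFDerivWithinAt_snd_comp_rightInvOn {Φ : E → E × V} {s t : Set E} {h : E → E} {y : E}
    (hΦ : HasFDerivWithinAt Φ T s (h y))
    (hT : (ContinuousLinearMap.fst ℝ E V ∘L T).IsInvertible) (hh : ContinuousOn h t)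
    (hst : MapsTo h t s) (hinv : ∀ x ∈ t, (Φ (h x)).1 = x) (hy : y ∈ t) :
    HasFDerivWithinAt (fun x ↦ (Φ (h x)).2) (tangentSlope T) t y := by
  obtain ⟨P, hP⟩ := hT
  have hfst : HasFDerivWithinAt (fun u ↦ (Φ u).1) (P : E →L[ℝ] E) s (h y) := hP ▸ hΦ.fst
  have hh' : HasFDerivWithinAt h (P.symm : E →L[ℝ] E) t y :=
    hfst.of_local_left_inverse ((hh y hy).tendsto_nhdsWithin hst) hy
      (Filter.eventually_of_mem self_mem_nhdsWithin hinv)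
  have hslope : tangentSlope T = (ContinuousLinearMap.snd ℝ E V ∘L T) ∘L P.symm := by
    rw [tangentSlope, ← hP, ContinuousLinearMap.inverse_equiv]
  exact hslope ▸ hΦ.snd.comp y hh' hst

end

lemma exists_graph_parametrization {Φ : E → E × V} {T : E → E →L[ℝ] E × V} {s t : Set E} {c : ℝ}
    (hΦ : ∀ u ∈ s, HasFDerivWithinAt Φ (T u) s u)
    (hT : ∀ u ∈ s, (ContinuousLinearMap.fst ℝ E V ∘L T u).IsInvertible) (hc : 0 < c)
    (hexp : ∀ x ∈ s, ∀ y ∈ s, c * ‖x - y‖ ≤ ‖(Φ x - Φ y).1‖)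
    (hsurj : SurjOn (fun u ↦ (Φ u).1) s t) :
    ∃ h : E → E, MapsTo h t s ∧ (∀ x ∈ t, (Φ (h x)).1 = x) ∧
      (∀ x ∈ t, ∀ y ∈ t, c * ‖h x - h y‖ ≤ ‖x - y‖) ∧
      ∀ y ∈ t, HasFDerivWithinAt (fun x ↦ (Φ (h x)).2) (tangentSlope (T (h y))) t y := by
  let h := Function.invFunOn (fun u ↦ (Φ u).1) s
  have hst : MapsTo h t s := hsurj.mapsTo_invFunOn
  have hinv : ∀ x ∈ t, (Φ (h x)).1 = x := hsurj.rightInvOn_invFunOn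
  have hlip : ∀ x ∈ t, ∀ y ∈ t, c * ‖h x - h y‖ ≤ ‖x - y‖ := fun x hx y hy ↦ by
    simpa only [Prod.fst_sub, hinv x hx, hinv y hy] using hexp _ (hst hx) _ (hst hy)
  have hcont : ContinuousOn h t := by
    refine (LipschitzOnWith.of_dist_le_mul (K := c⁻¹.toNNReal) fun x hx y hy ↦ ?_).continuousOn
    rw [Real.coe_toNNReal _ (by positivity), dist_eq_norm, dist_eq_norm, le_inv_mul_iff₀ hc]
    exact hlip x hx y hy
  exact ⟨h, hst, hinv, hlip, fun y hy ↦ hasFDerivWithinAt_snd_comp_rightInvOn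
    (hΦ _ (hst hy)) (hT _ (hst hy)) hcont hst hinv hy⟩

/-- `A` is block diagonal for the splitting `E × V`, expands `E` by at least `μ` and expands `V` by
at most `ν`. -/
structure HyperbolicSplitting (μ ν : ℝ) (A : E × V →L[ℝ] E × V) : Prop where
  snd_inl : ∀ u : E, (A (u, 0)).2 = 0
  fst_inr : ∀ v : V, (A (0, v)).1 = 0
  expand : ∀ u : E, μ * ‖u‖ ≤ ‖A (u, 0)‖
  contract : ∀ v : V, ‖A (0, v)‖ ≤ ν * ‖v‖

namespace HyperbolicSplitting

variable {μ ν : ℝ} {A : E × V →L[ℝ] E × V}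

lemma apply_eq (hA : HyperbolicSplitting μ ν A) (x : E × V) :
    A x = ((A (x.1, 0)).1, (A (0, x.2)).2) := by
  have hsum : A x = A (x.1, 0) + A (0, x.2) := by rw [← map_add, Prod.fst_add_snd]
  ext1 <;> simp [hsum, hA.snd_inl, hA.fst_inr]

lemma le_norm_fst (hA : HyperbolicSplitting μ ν A) (x : E × V) : μ * ‖x.1‖ ≤ ‖(A x).1‖ := by
  rw [hA.apply_eq x]
  simpa [Prod.norm_def, hA.snd_inl] using hA.expand x.1

lemma norm_snd_le (hA : HyperbolicSplitting μ ν A) (x : E × V) : ‖(A x).2‖ ≤ ν * ‖x.2‖ := by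
  rw [hA.apply_eq x]
  exact (_root_.norm_snd_le (A (0, x.2))).trans (hA.contract x.2)

end HyperbolicSplitting

/-- Constants controlling the graph transform of maps with expansion `μ` and center-stable growth
`ν` when the scales `ℓ` vary by a factor `θ` in each step: nonlinear terms are of relative size `η`,
graphs are expanded by `c`, and slopes contract by `κ`. -/
structure GraphTransformRates (μ ν θ κ c η : ℝ) : Prop where
  nonneg_ν : 0 ≤ ν
  pos_κ : 0 < κ
  κ_lt_one : κ < 1
  one_le_c : 1 ≤ c
  ν_le : ν ≤ κ * c
  θ_le : θ ≤ κ * c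
  c_le : c ≤ μ - η
  pos_η : 0 < η
  η_le : η ≤ (1 - κ) / 20

namespace GraphTransformRates

variable {μ ν θ κ c η : ℝ}

/-- With `κ = e^{-λ/2}` and `c = e^{3λ/4}` both `ν = e^{δ₀}` and `θ = e^{δ₂}` are at most
`κ c = e^{λ/4}`. -/
lemma exists_of_exp {lam δ0 δ2 : ℝ} (hlam : 0 < lam) (hδ0 : δ0 ≤ lam / 4) (hδ2 : δ2 ≤ lam / 4) :
    ∃ η, GraphTransformRates (Real.exp lam) (Real.exp δ0) (Real.exp δ2) (Real.exp (-(lam / 2)))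
      (Real.exp (3 * lam / 4)) η := by
  have hκ : Real.exp (-(lam / 2)) < 1 := Real.exp_lt_one_iff.2 (by linarith)
  have hcμ : Real.exp (3 * lam / 4) < Real.exp lam := Real.exp_lt_exp.2 (by linarith)
  have hκc : Real.exp (-(lam / 2)) * Real.exp (3 * lam / 4) = Real.exp (lam / 4) := by
    rw [← Real.exp_add]
    ring_nf
  refine ⟨min (Real.exp lam - Real.exp (3 * lam / 4)) ((1 - Real.exp (-(lam / 2))) / 20),
    { nonneg_ν := (Real.exp_pos _).le
      pos_κ := Real.exp_pos _
      κ_lt_one := hκ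
      one_le_c := Real.one_le_exp (by linarith)
      ν_le := hκc ▸ Real.exp_le_exp.2 (by linarith)
      θ_le := hκc ▸ Real.exp_le_exp.2 (by linarith)
      c_le := le_sub_comm.1 (min_le_left _ _)
      pos_η := lt_min (by linarith) (by linarith)
      η_le := min_le_right _ _ }⟩

lemma pos_c (hr : GraphTransformRates μ ν θ κ c η) : 0 < c :=
  one_pos.trans_le hr.one_le_c

lemma c_le_μ (hr : GraphTransformRates μ ν θ κ c η) : c ≤ μ := by
  linarith [hr.c_le, hr.pos_η]

lemma ν_add_two_mul_η_le (hr : GraphTransformRates μ ν θ κ c η) : ν + 2 * η ≤ c := by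
  nlinarith [hr.ν_le, hr.one_le_c, hr.η_le, hr.κ_lt_one]

lemma κ_mul_add_η_mem_Icc (hr : GraphTransformRates μ ν θ κ c η) {K M : ℝ} (hM : 1 ≤ M)
    (hK : K ∈ Icc 0 M) : κ * K + η ∈ Icc 0 M := by
  refine ⟨add_nonneg (mul_nonneg hr.pos_κ.le hK.1) hr.pos_η.le, ?_⟩
  calc κ * K + η ≤ κ * M + (1 - κ) * M := by
        gcongr
        · exact hr.pos_κ.le
        · exact hK.2
        · nlinarith [hr.η_le, hr.κ_lt_one]
    _ = M := by ring

/-- `ν K + ε ≤ (κ K + ε) c`, so a perturbation of relative size `ε` of a hyperbolic splitting maps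
slopes `K` to slopes `κ K + ε`. -/
lemma expand_and_mem_unstableCone (hr : GraphTransformRates μ ν θ κ c η)
    {A : E × V →L[ℝ] E × V} (hA : HyperbolicSplitting μ ν A) {K ε : ℝ} (hK : 0 ≤ K) (hε : 0 ≤ ε)
    (hεη : ε ≤ η) {x y : E × V} (hx : x ∈ unstableCone K) (hy : ‖y - A x‖ ≤ ε * ‖x.1‖) :
    c * ‖x.1‖ ≤ ‖y.1‖ ∧ y ∈ unstableCone (κ * K + ε) := by
  have hfst : ‖(A x).1‖ - ‖y.1‖ ≤ ε * ‖x.1‖ :=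
    calc ‖(A x).1‖ - ‖y.1‖ ≤ ‖(y - A x).1‖ := by
          rw [Prod.fst_sub, norm_sub_rev]
          exact norm_sub_norm_le _ _
      _ ≤ ε * ‖x.1‖ := (norm_fst_le _).trans hy
  have hsnd : ‖y.2‖ - ‖(A x).2‖ ≤ ε * ‖x.1‖ :=
    calc ‖y.2‖ - ‖(A x).2‖ ≤ ‖(y - A x).2‖ := norm_sub_norm_le _ _
      _ ≤ ε * ‖x.1‖ := (norm_snd_le _).trans hy
  have hexp : c * ‖x.1‖ ≤ ‖y.1‖ :=
    calc c * ‖x.1‖ ≤ (μ - ε) * ‖x.1‖ := by gcongr; linarith [hr.c_le]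
      _ ≤ ‖y.1‖ := by linarith [hA.le_norm_fst x]
  have hslope : ν * K + ε ≤ (κ * K + ε) * c := by
    nlinarith [mul_le_mul_of_nonneg_right hr.ν_le hK, mul_le_mul_of_nonneg_left hr.one_le_c hε]
  refine ⟨hexp, ?_⟩
  calc ‖y.2‖ ≤ ν * ‖x.2‖ + ε * ‖x.1‖ := by linarith [hA.norm_snd_le x]
    _ ≤ ν * (K * ‖x.1‖) + ε * ‖x.1‖ := by
        gcongr
        · exact hr.nonneg_ν
        · exact hx
    _ = (ν * K + ε) * ‖x.1‖ := by ring
    _ ≤ (κ * K + ε) * c * ‖x.1‖ := by gcongr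
    _ = (κ * K + ε) * (c * ‖x.1‖) := by ring
    _ ≤ (κ * K + ε) * ‖y.1‖ := by
        have := hr.pos_κ
        gcongr

end GraphTransformRates

/-- A `C^{1+Lip}` map of the closed `r`-ball of `E × V` with derivative field `DF`, fixing `0`, with
hyperbolic derivative there and `Lip(DF) ≤ ℓ`. -/
structure HyperbolicChart (μ ν ℓ r : ℝ) (F : E × V → E × V) (DF : E × V → E × V →L[ℝ] E × V) :
    Prop where
  map_zero : F 0 = 0
  hasDeriv : ∀ z ∈ closedBall (0 : E × V) r, HasFDerivWithinAt F (DF z) (closedBall 0 r) z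
  lipDeriv : LipschitzOnWith ℓ.toNNReal DF (closedBall 0 r)
  splitting : HyperbolicSplitting μ ν (DF 0)

namespace HyperbolicChart

variable {μ ν θ κ c η ℓ r M K : ℝ} {F : E × V → E × V} {DF : E × V → E × V →L[ℝ] E × V}
  {z w x y : E × V}

lemma mono (hF : HyperbolicChart μ ν ℓ r F DF) {r' : ℝ} (hr' : r' ≤ r) :
    HyperbolicChart μ ν ℓ r' F DF where
  map_zero := hF.map_zero
  hasDeriv z hz := have hsub := closedBall_subset_closedBall hr'
    (hF.hasDeriv z (hsub hz)).mono hsub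
  lipDeriv := hF.lipDeriv.mono (closedBall_subset_closedBall hr')
  splitting := hF.splitting

lemma norm_deriv_sub_le (hF : HyperbolicChart μ ν ℓ r F DF) (hℓ : 0 ≤ ℓ)
    (hz : z ∈ closedBall 0 r) (hw : w ∈ closedBall 0 r) : ‖DF z - DF w‖ ≤ ℓ * ‖z - w‖ := by
  simpa only [Real.coe_toNNReal _ hℓ] using hF.lipDeriv.norm_sub_le hz hw

lemma norm_deriv_sub_deriv_zero_le (hF : HyperbolicChart μ ν ℓ r F DF) (hℓ : 0 ≤ ℓ)
    (hz : z ∈ closedBall 0 r) : ‖DF z - DF 0‖ ≤ ℓ * r := by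
  have hzr : ‖z‖ ≤ r := mem_closedBall_zero_iff.1 hz
  have h0 : (0 : E × V) ∈ closedBall 0 r := mem_closedBall_self ((norm_nonneg z).trans hzr)
  calc ‖DF z - DF 0‖ ≤ ℓ * ‖z - 0‖ := hF.norm_deriv_sub_le hℓ hz h0
    _ ≤ ℓ * r := by rw [sub_zero]; gcongr

lemma norm_sub_sub_le (hF : HyperbolicChart μ ν ℓ r F DF) (hℓ : 0 ≤ ℓ)
    (hz : z ∈ closedBall 0 r) (hw : w ∈ closedBall 0 r) :
    ‖F z - F w - DF 0 (z - w)‖ ≤ ℓ * r * ‖z - w‖ :=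
  (convex_closedBall 0 r).norm_image_sub_le_of_norm_hasFDerivWithin_le' hF.hasDeriv
    (fun _ hx ↦ hF.norm_deriv_sub_deriv_zero_le hℓ hx) hw hz

lemma norm_sub_sub_le_of_mem_unstableCone (hF : HyperbolicChart μ ν ℓ r F DF) (hℓ : 0 ≤ ℓ)
    (hM : 1 ≤ M) (hη : ℓ * r * M ≤ η) (hKM : K ≤ M) (hz : z ∈ closedBall 0 r)
    (hw : w ∈ closedBall 0 r) (hzw : z - w ∈ unstableCone K) :
    ‖F z - F w - DF 0 (z - w)‖ ≤ η * ‖(z - w).1‖ := by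
  have hr0 : 0 ≤ r := nonempty_closedBall.1 ⟨z, hz⟩
  calc ‖F z - F w - DF 0 (z - w)‖ ≤ ℓ * r * (M * ‖(z - w).1‖) := by
        grw [hF.norm_sub_sub_le hℓ hz hw, norm_le_of_mem_unstableCone hM hKM hzw]
    _ = ℓ * r * M * ‖(z - w).1‖ := by ring
    _ ≤ η * ‖(z - w).1‖ := by gcongr

lemma expand_and_map_sub_mem_unstableCone (hF : HyperbolicChart μ ν ℓ r F DF)
    (hr : GraphTransformRates μ ν θ κ c η) (hℓ : 0 ≤ ℓ) (hM : 1 ≤ M) (hη : ℓ * r * M ≤ η)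
    (hK : K ∈ Icc 0 M) (hz : z ∈ closedBall 0 r) (hw : w ∈ closedBall 0 r)
    (hzw : z - w ∈ unstableCone K) :
    c * ‖(z - w).1‖ ≤ ‖(F z - F w).1‖ ∧ F z - F w ∈ unstableCone (κ * K + η) :=
  hr.expand_and_mem_unstableCone hF.splitting hK.1 hr.pos_η.le le_rfl hzw
    (hF.norm_sub_sub_le_of_mem_unstableCone hℓ hM hη hK.2 hz hw hzw)

lemma expand_and_deriv_mem_unstableCone (hF : HyperbolicChart μ ν ℓ r F DF)
    (hr : GraphTransformRates μ ν θ κ c η) (hℓ : 0 ≤ ℓ) (hM : 1 ≤ M) (hη : ℓ * r * M ≤ η)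
    (hK : K ∈ Icc 0 M) (hz : z ∈ closedBall 0 r) (hx : x ∈ unstableCone K) :
    c * ‖x.1‖ ≤ ‖(DF z x).1‖ ∧ DF z x ∈ unstableCone (κ * K + η) := by
  have hr0 : 0 ≤ r := nonempty_closedBall.1 ⟨z, hz⟩
  refine hr.expand_and_mem_unstableCone hF.splitting hK.1 hr.pos_η.le le_rfl hx ?_
  calc ‖DF z x - DF 0 x‖ ≤ ‖DF z - DF 0‖ * ‖x‖ := (DF z - DF 0).le_opNorm x
    _ ≤ ℓ * r * (M * ‖x.1‖) := by
        grw [hF.norm_deriv_sub_deriv_zero_le hℓ hz, norm_le_of_mem_unstableCone hM hK.2 hx]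
    _ = ℓ * r * M * ‖x.1‖ := by ring
    _ ≤ η * ‖x.1‖ := by gcongr

/-- The vertical difference `x - y = (0, v)` is seen by `DF 0` only in the second component. -/
lemma norm_deriv_sub_apply_le (hF : HyperbolicChart μ ν ℓ r F DF) (hℓ : 0 ≤ ℓ)
    (hz : z ∈ closedBall 0 r) (hw : w ∈ closedBall 0 r) (hxy : x.1 = y.1) :
    ‖(DF z x - DF w y).1‖ ≤ ℓ * ‖z - w‖ * ‖x‖ + ℓ * r * ‖x.2 - y.2‖ ∧
      ‖(DF z x - DF w y).2‖ ≤ ℓ * ‖z - w‖ * ‖x‖ + (ν + ℓ * r) * ‖x.2 - y.2‖ := by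
  set v := x.2 - y.2
  have hxyv : x - y = (0, v) := Prod.ext (sub_eq_zero.2 hxy) rfl
  have hvert : ‖((0 : E), v)‖ = ‖v‖ := by simp [Prod.norm_def]
  set e := (DF z - DF w) x + (DF w - DF 0) (0, v) with he
  have hsplit : DF z x - DF w y = e + DF 0 (0, v) := by
    rw [he, ← hxyv]
    simp only [sub_apply, map_sub]
    abel
  have hnorm : ‖e‖ ≤ ℓ * ‖z - w‖ * ‖x‖ + ℓ * r * ‖v‖ := by
    refine (norm_add_le _ _).trans (add_le_add ?_ ?_)
    · exact (DF z - DF w).le_of_opNorm_le (hF.norm_deriv_sub_le hℓ hz hw) x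
    · exact hvert ▸ (DF w - DF 0).le_of_opNorm_le (hF.norm_deriv_sub_deriv_zero_le hℓ hw) _
  have hfst : ‖e.1‖ ≤ ‖e‖ := norm_fst_le e
  have hsnd : ‖e.2‖ ≤ ‖e‖ := norm_snd_le e
  have hν : ‖(DF 0 (0, v)).2‖ ≤ ν * ‖v‖ := hF.splitting.norm_snd_le (0, v)
  rw [hsplit, Prod.fst_add, Prod.snd_add, hF.splitting.fst_inr, add_zero]
  exact ⟨hfst.trans hnorm, (norm_add_le _ _).trans (by linarith)⟩

end HyperbolicChart

/-- `g` is `C^{1+Lip}` on the closed `r`-ball of `E` with derivative field `G`, with `Lip(g) ≤ K`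
and `Lip(G) ≤ a`. -/
structure C1LipOn (r K a : ℝ) (g : E → V) (G : E → E →L[ℝ] V) : Prop where
  hasDeriv : ∀ u ∈ closedBall (0 : E) r, HasFDerivWithinAt g (G u) (closedBall 0 r) u
  lip : LipschitzOnWith K.toNNReal g (closedBall 0 r)
  lipDeriv : LipschitzOnWith a.toNNReal G (closedBall 0 r)

namespace C1LipOn

variable {r K a : ℝ} {g : E → V} {G : E → E →L[ℝ] V}

lemma mono (hg : C1LipOn r K a g G) {r' K' a' : ℝ} (hr : r' ≤ r) (hK : K ≤ K') (ha : a ≤ a') :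
    C1LipOn r' K' a' g G where
  hasDeriv u hu := have hsub := closedBall_subset_closedBall hr
    (hg.hasDeriv u (hsub hu)).mono hsub
  lip := (hg.lip.mono (closedBall_subset_closedBall hr)).weaken (Real.toNNReal_le_toNNReal hK)
  lipDeriv :=
    (hg.lipDeriv.mono (closedBall_subset_closedBall hr)).weaken (Real.toNNReal_le_toNNReal ha)

lemma sub_mem_unstableCone (hg : C1LipOn r K a g G) (hK : 0 ≤ K) {p q : E × V}
    (hp : p ∈ graphOver r g) (hq : q ∈ graphOver r g) : p - q ∈ unstableCone K := by
  have := hg.lip.norm_sub_le hp.1 hq.1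
  rwa [Real.coe_toNNReal _ hK, ← hp.2, ← hq.2] at this

/-- Interior points see the Lipschitz constant of `g`; boundary points follow by continuity
of `G`. -/
lemma norm_deriv_le (hg : C1LipOn r K a g G) (hr : 0 < r) (hK : 0 ≤ K) {u : E}
    (hu : u ∈ closedBall 0 r) : ‖G u‖ ≤ K := by
  have hinterior : ∀ x ∈ ball (0 : E) r, ‖G x‖ ≤ K := fun x hx ↦ by
    have hmem : closedBall (0 : E) r ∈ nhds x :=
      Filter.mem_of_superset (isOpen_ball.mem_nhds hx) ball_subset_closedBall
    simpa only [Real.coe_toNNReal _ hK] using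
      ((hg.hasDeriv x (ball_subset_closedBall hx)).hasFDerivAt hmem).le_of_lipschitzOn hmem hg.lip
  have hcont : ContinuousWithinAt (fun x ↦ ‖G x‖) (ball 0 r) u :=
    ((hg.lipDeriv.continuousOn u hu).mono ball_subset_closedBall).norm
  exact hcont.closure_le (closure_ball (0 : E) hr.ne' ▸ hu) continuousWithinAt_const hinterior

end C1LipOn

/-- The derivative of `u ↦ F (u, g u)` when `F` and `g` have derivative fields `DF` and `G`. -/
def graphDeriv (DF : E × V → E × V →L[ℝ] E × V) (g : E → V) (G : E → E →L[ℝ] V) (u : E) :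
    E →L[ℝ] E × V :=
  DF (u, g u) ∘L (ContinuousLinearMap.id ℝ E).prod (G u)

namespace HyperbolicChart

variable {μ ν θ κ c η ℓ r R M K a D : ℝ} {F : E × V → E × V} {DF : E × V → E × V →L[ℝ] E × V}
  {g : E → V} {G : E → E →L[ℝ] V} {u v : E}

lemma hasFDerivWithinAt_graph (hF : HyperbolicChart μ ν ℓ r F DF) (hg : C1LipOn R K a g G)
    (hgr : graphOver R g ⊆ closedBall 0 r) (hu : u ∈ closedBall 0 R) :
    HasFDerivWithinAt (fun x ↦ F (x, g x)) (graphDeriv DF g G u) (closedBall 0 R) u :=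
  (hF.hasDeriv (u, g u) (hgr (mk_mem_graphOver hu))).comp u
    ((hasFDerivWithinAt_id u _).prodMk (hg.hasDeriv u hu)) fun _ hx ↦ hgr (mk_mem_graphOver hx)

lemma expand_and_graph_sub_mem_unstableCone (hF : HyperbolicChart μ ν ℓ r F DF)
    (hr : GraphTransformRates μ ν θ κ c η) (hℓ : 0 ≤ ℓ) (hM : 1 ≤ M) (hη : ℓ * r * M ≤ η)
    (hK : K ∈ Icc 0 M) (hg : C1LipOn R K a g G) (hgr : graphOver R g ⊆ closedBall 0 r)
    (hu : u ∈ closedBall 0 R) (hv : v ∈ closedBall 0 R) :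
    c * ‖u - v‖ ≤ ‖(F (u, g u) - F (v, g v)).1‖ ∧
      F (u, g u) - F (v, g v) ∈ unstableCone (κ * K + η) :=
  have hu' := mk_mem_graphOver hu
  have hv' := mk_mem_graphOver hv
  hF.expand_and_map_sub_mem_unstableCone hr hℓ hM hη hK (hgr hu') (hgr hv')
    (hg.sub_mem_unstableCone hK.1 hu' hv')

lemma surjOn_fst_graph [FiniteDimensional ℝ E] (hF : HyperbolicChart μ ν ℓ r F DF)
    (hr : GraphTransformRates μ ν θ κ c η) (hℓ : 0 ≤ ℓ) (hM : 1 ≤ M) (hη : ℓ * r * M ≤ η)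
    (hK : K ∈ Icc 0 M) (hg : C1LipOn R K a g G) (hg0 : g 0 = 0)
    (hgr : graphOver R g ⊆ closedBall 0 r) (hR : 0 ≤ R) :
    SurjOn (fun u ↦ (F (u, g u)).1) (closedBall 0 R) (closedBall 0 (c * R)) := by
  have := FiniteDimensional.complete ℝ E
  have hμ : 0 < μ := hr.pos_c.trans_le hr.c_le_μ
  let A : E →L[ℝ] E :=
    ContinuousLinearMap.fst ℝ E V ∘L DF 0 ∘L ContinuousLinearMap.inl ℝ E V
  have hA : ∀ w, μ * ‖w‖ ≤ ‖A w‖ := fun w ↦ hF.splitting.le_norm_fst (w, 0)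
  refine (surjOn_closedBall_of_norm_sub_sub_le (isInvertible_of_le_norm hμ hA) hμ hA hr.pos_η.le hR
    (by rw [hg0, Prod.mk_zero_zero, hF.map_zero, Prod.fst_zero]) fun x hx y hy ↦ ?_).mono
    subset_rfl (closedBall_subset_closedBall (mul_le_mul_of_nonneg_right hr.c_le hR))
  have hxy := hF.norm_sub_sub_le_of_mem_unstableCone hℓ hM hη hK.2
    (hgr (mk_mem_graphOver hx)) (hgr (mk_mem_graphOver hy))
    (hg.sub_mem_unstableCone hK.1 (mk_mem_graphOver hx) (mk_mem_graphOver hy))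
  have hfst : A (x - y) = (DF 0 ((x, g x) - (y, g y))).1 := by
    rw [hF.splitting.apply_eq ((x, g x) - (y, g y))]
    rfl
  rw [hfst]
  exact (norm_fst_le _).trans hxy

lemma expand_and_graphDeriv_mem_unstableCone (hF : HyperbolicChart μ ν ℓ r F DF)
    (hr : GraphTransformRates μ ν θ κ c η) (hℓ : 0 ≤ ℓ) (hM : 1 ≤ M) (hη : ℓ * r * M ≤ η)
    (hK : K ∈ Icc 0 M) (hu : (u, g u) ∈ closedBall 0 r) (hG : ‖G u‖ ≤ K) (w : E) :
    c * ‖w‖ ≤ ‖(graphDeriv DF g G u w).1‖ ∧ graphDeriv DF g G u w ∈ unstableCone (κ * K + η) :=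
  hF.expand_and_deriv_mem_unstableCone (x := (w, G u w)) hr hℓ hM hη hK hu
    ((G u).le_of_opNorm_le hG w)

lemma isInvertible_fst_graphDeriv [FiniteDimensional ℝ E] (hF : HyperbolicChart μ ν ℓ r F DF)
    (hr : GraphTransformRates μ ν θ κ c η) (hℓ : 0 ≤ ℓ) (hM : 1 ≤ M) (hη : ℓ * r * M ≤ η)
    (hK : K ∈ Icc 0 M) (hu : (u, g u) ∈ closedBall 0 r) (hG : ‖G u‖ ≤ K) :
    (ContinuousLinearMap.fst ℝ E V ∘L graphDeriv DF g G u).IsInvertible :=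
  isInvertible_of_le_norm hr.pos_c fun w ↦
    (hF.expand_and_graphDeriv_mem_unstableCone hr hℓ hM hη hK hu hG w).1

lemma norm_tangentSlope_graphDeriv_zero_le [FiniteDimensional ℝ E]
    (hF : HyperbolicChart μ ν ℓ r F DF) (hr : GraphTransformRates μ ν θ κ c η) (hg0 : g 0 = 0)
    (hD : ‖G 0‖ ≤ D) : ‖tangentSlope (graphDeriv DF g G 0)‖ ≤ κ * D := by
  have hD0 : 0 ≤ D := (norm_nonneg _).trans hD
  have hcone : ∀ w, c * ‖w‖ ≤ ‖(graphDeriv DF g G 0 w).1‖ ∧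
      graphDeriv DF g G 0 w ∈ unstableCone (κ * D + 0) := fun w ↦ by
    refine hr.expand_and_mem_unstableCone (x := (w, G 0 w)) hF.splitting hD0 le_rfl hr.pos_η.le
      ((G 0).le_of_opNorm_le hD w) ?_
    simp [graphDeriv, hg0, ← Prod.zero_eq_mk]
  rw [add_zero] at hcone
  have hinv : (ContinuousLinearMap.fst ℝ E V ∘L graphDeriv DF g G 0).IsInvertible :=
    isInvertible_of_le_norm hr.pos_c fun w ↦ (hcone w).1
  exact norm_tangentSlope_le hinv (mul_nonneg hr.pos_κ.le hD0) fun w ↦ (hcone w).2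

lemma norm_graphDeriv_sub_apply_le (hF : HyperbolicChart μ ν ℓ r F DF) (hℓ : 0 ≤ ℓ)
    (hM : 1 ≤ M) (hν : 0 ≤ ν) (hK : K ∈ Icc 0 M) (ha : 0 ≤ a) (hg : C1LipOn R K a g G)
    (hgr : graphOver R g ⊆ closedBall 0 r) (hG : ‖G u‖ ≤ K)
    (hu : u ∈ closedBall 0 R) (hv : v ∈ closedBall 0 R) (w : E) :
    ‖(graphDeriv DF g G u w - graphDeriv DF g G v w).1‖ ≤
        (M ^ 2 * ℓ + ℓ * r * a) * ‖u - v‖ * ‖w‖ ∧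
      ‖(graphDeriv DF g G u w - graphDeriv DF g G v w).2‖ ≤
        (M ^ 2 * ℓ + (ν + ℓ * r) * a) * ‖u - v‖ * ‖w‖ := by
  have hr0 : 0 ≤ r := nonempty_closedBall.1 ⟨_, hgr (mk_mem_graphOver hu)⟩
  have hpoint : ‖(u, g u) - (v, g v)‖ ≤ M * ‖u - v‖ := norm_le_of_mem_unstableCone hM hK.2
    (hg.sub_mem_unstableCone hK.1 (mk_mem_graphOver hu) (mk_mem_graphOver hv))
  have hvec : ‖(w, G u w)‖ ≤ M * ‖w‖ := norm_le_of_mem_unstableCone (x := (w, G u w)) hM hK.2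
    ((G u).le_of_opNorm_le hG w)
  have hGuv : ‖G u w - G v w‖ ≤ a * ‖u - v‖ * ‖w‖ := by
    refine (G u - G v).le_of_opNorm_le ?_ w
    simpa only [Real.coe_toNNReal _ ha] using hg.lipDeriv.norm_sub_le hu hv
  obtain ⟨hfst, hsnd⟩ := hF.norm_deriv_sub_apply_le (x := (w, G u w)) (y := (w, G v w)) hℓ
    (hgr (mk_mem_graphOver hu)) (hgr (mk_mem_graphOver hv)) rfl
  refine ⟨hfst.trans ?_, hsnd.trans ?_⟩ <;> grw [hpoint, hvec, hGuv] <;> apply le_of_eq <;> ring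

lemma norm_tangentSlope_graphDeriv_sub_le [FiniteDimensional ℝ E]
    (hF : HyperbolicChart μ ν ℓ r F DF) (hr : GraphTransformRates μ ν θ κ c η) (hℓ : 0 ≤ ℓ)
    (hM : 1 ≤ M) (hη : ℓ * r * M ≤ η) (hK : K ∈ Icc 0 M) (ha : 0 ≤ a) (hg : C1LipOn R K a g G)
    (hgr : graphOver R g ⊆ closedBall 0 r) (hG : ∀ x ∈ closedBall (0 : E) R, ‖G x‖ ≤ K)
    (hu : u ∈ closedBall 0 R) (hv : v ∈ closedBall 0 R) :
    ‖tangentSlope (graphDeriv DF g G u) - tangentSlope (graphDeriv DF g G v)‖ ≤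
      ((1 + M) * M ^ 2 * ℓ + c * a) / c * ‖u - v‖ := by
  have hr0 : 0 ≤ r := nonempty_closedBall.1 ⟨_, hgr (mk_mem_graphOver hu)⟩
  have hν := hr.nonneg_ν
  have hK' := hr.κ_mul_add_η_mem_Icc hM hK
  have hcone : ∀ x ∈ closedBall (0 : E) R, ∀ w, c * ‖w‖ ≤ ‖(graphDeriv DF g G x w).1‖ ∧
      graphDeriv DF g G x w ∈ unstableCone (κ * K + η) := fun x hx ↦
    hF.expand_and_graphDeriv_mem_unstableCone hr hℓ hM hη hK (hgr (mk_mem_graphOver hx)) (hG x hx)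
  have hinv : ∀ x ∈ closedBall (0 : E) R,
      (ContinuousLinearMap.fst ℝ E V ∘L graphDeriv DF g G x).IsInvertible := fun x hx ↦
    hF.isInvertible_fst_graphDeriv hr hℓ hM hη hK (hgr (mk_mem_graphOver hx)) (hG x hx)
  have hslope : ‖tangentSlope (graphDeriv DF g G v)‖ ≤ M :=
    (norm_tangentSlope_le (hinv v hv) hK'.1 fun w ↦ (hcone v hv w).2).trans hK'.2
  have hdiff := hF.norm_graphDeriv_sub_apply_le hℓ hM hν hK ha hg hgr (hG u hu) hu hv
  have hc := hr.pos_c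
  have hℓr : ℓ * r ≤ η := (le_mul_of_one_le_right (by positivity) hM).trans hη
  calc _ ≤ ((M ^ 2 * ℓ + (ν + ℓ * r) * a) * ‖u - v‖
        + M * ((M ^ 2 * ℓ + ℓ * r * a) * ‖u - v‖)) / c :=
      norm_tangentSlope_sub_le (hinv u hu) (hinv v hv) hc (by positivity) (by positivity) hslope
        (fun w ↦ (hcone u hu w).1) (fun w ↦ (hdiff w).1) fun w ↦ (hdiff w).2
    _ = ((1 + M) * M ^ 2 * ℓ + (ν + ℓ * r + ℓ * r * M) * a) / c * ‖u - v‖ := by ring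
    _ ≤ ((1 + M) * M ^ 2 * ℓ + c * a) / c * ‖u - v‖ := by
      gcongr
      linarith [hr.ν_add_two_mul_η_le]

lemma exists_graph_image [FiniteDimensional ℝ E] {R' : ℝ} (hF : HyperbolicChart μ ν ℓ r F DF)
    (hr : GraphTransformRates μ ν θ κ c η) (hℓ : 0 ≤ ℓ) (hM : 1 ≤ M) (hη : ℓ * r * M ≤ η)
    (hK : K ∈ Icc 0 M) (ha : 0 ≤ a) (hg : C1LipOn R K a g G) (hg0 : g 0 = 0)
    (hgr : graphOver R g ⊆ closedBall 0 r) (hD : ‖G 0‖ ≤ D) (hR : 0 < R) (hR' : 0 ≤ R')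
    (hRR' : R' ≤ c * R) :
    ∃ (g' : E → V) (G' : E → E →L[ℝ] V), g' 0 = 0 ∧
      C1LipOn R' (κ * K + η) (((1 + M) * M ^ 2 * ℓ + c * a) / c ^ 2) g' G' ∧ ‖G' 0‖ ≤ κ * D ∧
      graphOver R' g' ⊆ F '' graphOver R g := by
  have hc := hr.pos_c
  have h0 : (0 : E) ∈ closedBall 0 R := mem_closedBall_self hR.le
  have h0' : (0 : E) ∈ closedBall 0 R' := mem_closedBall_self hR'
  have hG : ∀ u ∈ closedBall (0 : E) R, ‖G u‖ ≤ K := fun u hu ↦ hg.norm_deriv_le hR hK.1 hu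
  have hsecant : ∀ x ∈ closedBall (0 : E) R, ∀ y ∈ closedBall (0 : E) R,
      c * ‖x - y‖ ≤ ‖(F (x, g x) - F (y, g y)).1‖ ∧
        F (x, g x) - F (y, g y) ∈ unstableCone (κ * K + η) := fun _ hx _ hy ↦
    hF.expand_and_graph_sub_mem_unstableCone hr hℓ hM hη hK hg hgr hx hy
  obtain ⟨h, hmaps, hfst, hlip, hderiv⟩ := exists_graph_parametrization
    (fun u hu ↦ hF.hasFDerivWithinAt_graph hg hgr hu)
    (fun u hu ↦ hF.isInvertible_fst_graphDeriv hr hℓ hM hη hK (hgr (mk_mem_graphOver hu)) (hG u hu))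
    hc (fun x hx y hy ↦ (hsecant x hx y hy).1)
    ((hF.surjOn_fst_graph hr hℓ hM hη hK hg hg0 hgr hR.le).mono subset_rfl
      (closedBall_subset_closedBall hRR'))
  have hF0 : F (0, g 0) = 0 := by rw [hg0, Prod.mk_zero_zero, hF.map_zero]
  have hh0 : h 0 = 0 := by
    have := (hsecant _ (hmaps h0') _ h0).1
    rw [Prod.fst_sub, hfst 0 h0', hF0, Prod.fst_zero, sub_zero, sub_zero, norm_zero] at this
    exact norm_le_zero_iff.1 (nonpos_of_mul_nonpos_right this hc)
  refine ⟨_, _, by simp only [hh0, hF0, Prod.snd_zero], ⟨hderiv, ?_, ?_⟩, ?_, ?_⟩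
  · refine LipschitzOnWith.of_dist_le_mul fun x hx y hy ↦ ?_
    have hslope := (hsecant _ (hmaps hx) _ (hmaps hy)).2
    rw [unstableCone, mem_ofPred_eq, Prod.fst_sub, hfst x hx, hfst y hy] at hslope
    rwa [Real.coe_toNNReal _ (hr.κ_mul_add_η_mem_Icc hM hK).1, dist_eq_norm, dist_eq_norm]
  · refine LipschitzOnWith.of_dist_le_mul fun x hx y hy ↦ ?_
    rw [Real.coe_toNNReal _ (by positivity), dist_eq_norm, dist_eq_norm]
    calc _ ≤ ((1 + M) * M ^ 2 * ℓ + c * a) / c * ‖h x - h y‖ :=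
          hF.norm_tangentSlope_graphDeriv_sub_le hr hℓ hM hη hK ha hg hgr hG (hmaps hx) (hmaps hy)
      _ = ((1 + M) * M ^ 2 * ℓ + c * a) / c ^ 2 * (c * ‖h x - h y‖) := by field_simp
      _ ≤ ((1 + M) * M ^ 2 * ℓ + c * a) / c ^ 2 * ‖x - y‖ := by gcongr; exact hlip x hx y hy
  · rw [hh0]
    exact hF.norm_tangentSlope_graphDeriv_zero_le hr hg0 hD
  · exact fun p hp ↦ ⟨_, mk_mem_graphOver (hmaps hp.1), Prod.ext (hfst p.1 hp.1) hp.2.symm⟩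

end HyperbolicChart

/-- A subset of the `r`-ball of `E × V` whose secants lie in `unstableCone K`, so that it is the
graph of a function on a subset of `E`, and which contains the graph of a `C^{1+Lip}` map with slope
at most `D` at `0` over the possibly smaller `R`-ball. -/
structure ConeGraph (r R K a D : ℝ) (S : Set (E × V)) : Prop where
  subset : S ⊆ closedBall 0 r
  sub_mem : ∀ p ∈ S, ∀ q ∈ S, p - q ∈ unstableCone K
  exists_graph : ∃ (g : E → V) (G : E → E →L[ℝ] V),
    g 0 = 0 ∧ C1LipOn R K a g G ∧ ‖G 0‖ ≤ D ∧ graphOver R g ⊆ S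

lemma C1LipOn.coneGraph {r R K a : ℝ} {g : E → V} {G : E → E →L[ℝ] V} (hg : C1LipOn r K a g G)
    (hK : 0 ≤ K) (hg0 : g 0 = 0) (hR : 0 ≤ R) (hRr : R ≤ r) (hKR : K * R ≤ r) :
    ConeGraph r R K a ‖G 0‖ (graphOver r g ∩ closedBall 0 r) where
  subset := inter_subset_right
  sub_mem p hp q hq := hg.sub_mem_unstableCone hK hp.1 hq.1
  exists_graph := by
    refine ⟨g, G, hg0, hg.mono hRr le_rfl le_rfl, le_rfl, fun p hp ↦ ?_⟩
    have hpr : p ∈ graphOver r g := ⟨closedBall_subset_closedBall hRr hp.1, hp.2⟩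
    have h0 : (0, g 0) ∈ graphOver r g := mk_mem_graphOver (mem_closedBall_self (hR.trans hRr))
    have hcone : p ∈ unstableCone K := by
      simpa only [hg0, Prod.mk_zero_zero, sub_zero] using hg.sub_mem_unstableCone hK hpr h0
    have hfst : ‖p.1‖ ≤ R := mem_closedBall_zero_iff.1 hp.1
    exact ⟨hpr, mem_closedBall_zero_iff.2 (max_le (hfst.trans hRr)
      (hcone.trans ((mul_le_mul_of_nonneg_left hfst hK).trans hKR)))⟩

namespace ConeGraph

variable {r R K a D : ℝ} {S : Set (E × V)}

lemma mono (hS : ConeGraph r R K a D S) {r' R' K' a' : ℝ} (hr : r ≤ r') (hR : R' ≤ R)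
    (hK : K ≤ K') (ha : a ≤ a') : ConeGraph r' R' K' a' D S where
  subset := hS.subset.trans (closedBall_subset_closedBall hr)
  sub_mem p hp q hq := (hS.sub_mem p hp q hq).trans
    (mul_le_mul_of_nonneg_right hK (norm_nonneg _))
  exists_graph := by
    obtain ⟨g, G, hg0, hg, hD, hgS⟩ := hS.exists_graph
    exact ⟨g, G, hg0, hg.mono hR hK ha, hD,
      fun p hp ↦ hgS ⟨closedBall_subset_closedBall hR hp.1, hp.2⟩⟩

lemma zero_mem (hS : ConeGraph r R K a D S) (hR : 0 ≤ R) : (0 : E × V) ∈ S := by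
  obtain ⟨g, _, hg0, _, _, hgS⟩ := hS.exists_graph
  simpa only [hg0, Prod.mk_zero_zero] using hgS (mk_mem_graphOver (mem_closedBall_self hR))

lemma injOn_fst (hS : ConeGraph r R K a D S) : InjOn Prod.fst S := fun p hp q hq hpq ↦ by
  have hsnd : ‖(p - q).2‖ ≤ K * ‖(p - q).1‖ := hS.sub_mem p hp q hq
  rw [Prod.fst_sub, hpq, sub_self, norm_zero, mul_zero, norm_le_zero_iff] at hsnd
  exact Prod.ext hpq (sub_eq_zero.1 hsnd)

lemma exists_eq_graphOver (hS : ConeGraph r r K a D S) :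
    ∃ (g : E → V) (G : E → E →L[ℝ] V), S = graphOver r g ∧ C1LipOn r K a g G ∧ ‖G 0‖ ≤ D := by
  obtain ⟨g, G, _, hg, hD, hgS⟩ := hS.exists_graph
  refine ⟨g, G, hgS.antisymm' fun p hp ↦ ?_, hg, hD⟩
  have hfst : p.1 ∈ closedBall (0 : E) r :=
    mem_closedBall_zero_iff.2 ((norm_fst_le p).trans (mem_closedBall_zero_iff.1 (hS.subset hp)))
  exact ⟨hfst, congrArg Prod.snd (hS.injOn_fst hp (hgS (mk_mem_graphOver hfst)) rfl)⟩

end ConeGraph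

lemma ConeGraph.step [FiniteDimensional ℝ E] {μ ν θ κ c η ℓ r R r' R' M K a D : ℝ}
    {F : E × V → E × V} {DF : E × V → E × V →L[ℝ] E × V} {S : Set (E × V)}
    (hS : ConeGraph r R K a D S) (hF : HyperbolicChart μ ν ℓ r F DF)
    (hr : GraphTransformRates μ ν θ κ c η) (hℓ : 0 ≤ ℓ) (hM : 1 ≤ M) (hη : ℓ * r * M ≤ η)
    (hK : K ∈ Icc 0 M) (ha : 0 ≤ a) (hR : 0 < R) (hR' : 0 ≤ R') (hRR' : R' ≤ c * R)
    (hMR' : M * R' ≤ r') :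
    ConeGraph r' R' (κ * K + η) (((1 + M) * M ^ 2 * ℓ + c * a) / c ^ 2) (κ * D)
      (F '' S ∩ closedBall 0 r') := by
  have hcone : ∀ p ∈ F '' S, ∀ q ∈ F '' S, p - q ∈ unstableCone (κ * K + η) := by
    rintro _ ⟨z, hz, rfl⟩ _ ⟨w, hw, rfl⟩
    exact (hF.expand_and_map_sub_mem_unstableCone hr hℓ hM hη hK (hS.subset hz) (hS.subset hw)
      (hS.sub_mem z hz w hw)).2
  refine ⟨inter_subset_right, fun p hp q hq ↦ hcone p hp.1 q hq.1, ?_⟩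
  obtain ⟨g, G, hg0, hg, hD, hgS⟩ := hS.exists_graph
  obtain ⟨g', G', hg0', hg', hD', himage⟩ :=
    hF.exists_graph_image hr hℓ hM hη hK ha hg hg0 (hgS.trans hS.subset) hD hR hR' hRR'
  refine ⟨g', G', hg0', hg', hD', fun p hp ↦ ?_⟩
  have hpF : p ∈ F '' S := image_mono hgS (himage hp)
  have hp0 : p ∈ unstableCone (κ * K + η) := by
    simpa only [sub_zero] using hcone p hpF 0 ⟨0, hS.zero_mem hR.le, hF.map_zero⟩
  refine ⟨hpF, mem_closedBall_zero_iff.2 ?_⟩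
  calc ‖p‖ ≤ M * ‖p.1‖ := norm_le_of_mem_unstableCone hM (hr.κ_mul_add_η_mem_Icc hM hK).2 hp0
    _ ≤ M * R' := by gcongr; exact mem_closedBall_zero_iff.1 hp.1
    _ ≤ r' := hMR'

lemma ConeGraph.scaled_step [FiniteDimensional ℝ E] {μ ν θ κ c η ℓ ℓ' d ρ ρ' M K b D : ℝ}
    {F : E × V → E × V} {DF : E × V → E × V →L[ℝ] E × V} {S : Set (E × V)}
    (hS : ConeGraph (d / ℓ) (ρ / ℓ) K (b * ℓ) D S) (hF : HyperbolicChart μ ν ℓ (d / ℓ) F DF)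
    (hr : GraphTransformRates μ ν θ κ c η) (hℓ : 0 < ℓ) (hℓ' : 0 < ℓ') (hℓℓ' : ℓ ≤ θ * ℓ')
    (hM : 1 ≤ M) (hdM : d * M ≤ η) (hK : K ∈ Icc 0 M) (hb : 0 ≤ b) (hρ : 0 < ρ) (hρ' : 0 ≤ ρ')
    (hρρ' : κ * ρ' ≤ ρ) (hMρ' : M * ρ' ≤ d) :
    ConeGraph (d / ℓ') (ρ' / ℓ') (κ * K + η) ((κ * b + (1 + M) * M ^ 2) * ℓ') (κ * D)
      (F '' S ∩ closedBall 0 (d / ℓ')) := by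
  have hc := hr.pos_c
  have : 0 < κ := hr.pos_κ
  have hℓκ : ℓ ≤ κ * c * ℓ' := hℓℓ'.trans (by gcongr; exact hr.θ_le)
  have hη : ℓ * (d / ℓ) * M ≤ η := by rwa [mul_div_cancel₀ d hℓ.ne']
  have hradius : ρ' / ℓ' ≤ c * (ρ / ℓ) := by
    rw [← mul_div_assoc, div_le_div_iff₀ hℓ' hℓ]
    calc ρ' * ℓ ≤ ρ' * (κ * c * ℓ') := by gcongr
      _ = c * (κ * ρ') * ℓ' := by ring
      _ ≤ c * ρ * ℓ' := by gcongr
  have hcurv : ((1 + M) * M ^ 2 * ℓ + c * (b * ℓ)) / c ^ 2 ≤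
      (κ * b + (1 + M) * M ^ 2) * ℓ' := by
    have hκc : κ ≤ c := hr.κ_lt_one.le.trans hr.one_le_c
    rw [div_le_iff₀ (by positivity)]
    calc (1 + M) * M ^ 2 * ℓ + c * (b * ℓ)
        ≤ (1 + M) * M ^ 2 * (κ * c * ℓ') + c * (b * (κ * c * ℓ')) := by gcongr
      _ ≤ (1 + M) * M ^ 2 * (c * c * ℓ') + c * (b * (κ * c * ℓ')) := by gcongr
      _ = (κ * b + (1 + M) * M ^ 2) * ℓ' * c ^ 2 := by ring
  exact (hS.step hF hr hℓ.le hM hη hK (by positivity) (by positivity) (by positivity) hradius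
    (by rw [← mul_div_assoc]; gcongr)).mono le_rfl le_rfl le_rfl hcurv

/-- A sequence of hyperbolic charts of radius `δ / ℓ k` whose scales `ℓ k` shrink by at most a
factor `θ` in each step. -/
structure HyperbolicChartSeq (μ ν θ δ : ℝ) (ℓ : ℕ → ℝ) (F : ℕ → E × V → E × V)
    (DF : ℕ → E × V → E × V →L[ℝ] E × V) : Prop where
  one_le_scale : ∀ k, 1 ≤ ℓ k
  scale_le : ∀ k, ℓ k ≤ θ * ℓ (k + 1)
  chart : ∀ k, HyperbolicChart μ ν (ℓ k) (δ / ℓ k) (F k) (DF k)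

namespace HyperbolicChartSeq

variable {μ ν θ δ : ℝ} {ℓ : ℕ → ℝ} {F : ℕ → E × V → E × V} {DF : ℕ → E × V → E × V →L[ℝ] E × V}

lemma pos_scale (hF : HyperbolicChartSeq μ ν θ δ ℓ F DF) (k : ℕ) : 0 < ℓ k :=
  one_pos.trans_le (hF.one_le_scale k)

lemma mono (hF : HyperbolicChartSeq μ ν θ δ ℓ F DF) {δ' : ℝ} (hδ : δ' ≤ δ) :
    HyperbolicChartSeq μ ν θ δ' ℓ F DF where
  one_le_scale := hF.one_le_scale
  scale_le := hF.scale_le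
  chart k := (hF.chart k).mono (div_le_div_of_nonneg_right hδ (hF.pos_scale k).le)

lemma shift (hF : HyperbolicChartSeq μ ν θ δ ℓ F DF) (m : ℕ) :
    HyperbolicChartSeq μ ν θ δ (fun k ↦ ℓ (m + k)) (fun k ↦ F (m + k)) (fun k ↦ DF (m + k)) where
  one_le_scale k := hF.one_le_scale (m + k)
  scale_le k := hF.scale_le (m + k)
  chart k := hF.chart (m + k)

end HyperbolicChartSeq

lemma mul_min_inv_pow_succ_mul_le {κ : ℝ} (hκ : 0 < κ) (hκ1 : κ ≤ 1) {x y : ℝ} (hy : 0 ≤ y)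
    {k : ℕ} : κ * min (κ⁻¹ ^ (k + 1) * x) y ≤ min (κ⁻¹ ^ k * x) y := by
  rw [mul_min_of_nonneg _ _ hκ.le, pow_succ', mul_assoc, mul_inv_cancel_left₀ hκ.ne']
  exact min_le_min_left _ (mul_le_of_le_one_left hy hκ1)

lemma ConeGraph.iterate [FiniteDimensional ℝ E] {μ ν θ κ c η d ρ M K b D : ℝ} {ℓ : ℕ → ℝ}
    {F : ℕ → E × V → E × V} {DF : ℕ → E × V → E × V →L[ℝ] E × V} {S : ℕ → Set (E × V)}
    (hS₀ : ConeGraph (d / ℓ 0) (ρ / ℓ 0) K (b * ℓ 0) D (S 0))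
    (hF : HyperbolicChartSeq μ ν θ d ℓ F DF) (hr : GraphTransformRates μ ν θ κ c η) (hM : 1 ≤ M)
    (hdM : d * M ≤ η) (hd : 0 < d) (hρ : 0 < ρ) (hK : 0 ≤ K) (hKM : K + 1 / 20 ≤ M) (hb : 0 ≤ b)
    (k : ℕ) (hS : ∀ j < k, S (j + 1) = F j '' S j ∩ closedBall 0 (d / ℓ (j + 1))) :
    ConeGraph (d / ℓ k) (min (κ⁻¹ ^ k * ρ) (d / M) / ℓ k) (κ ^ k * K + 1 / 20)
      ((κ ^ k * b + (1 + M) * M ^ 2 / (1 - κ)) * ℓ k) (κ ^ k * D) (S k) := by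
  have hκ := hr.pos_κ
  have hκ1 : 0 < 1 - κ := sub_pos.2 hr.κ_lt_one
  have hM0 : 0 < M := one_pos.trans_le hM
  have hT : 0 ≤ (1 + M) * M ^ 2 / (1 - κ) := by positivity
  induction k with
  | zero =>
    have hℓ := hF.pos_scale 0
    simp only [pow_zero, one_mul]
    exact hS₀.mono le_rfl (by gcongr; exact min_le_left _ _) (by linarith) (by gcongr; linarith)
  | succ k ih =>
    have hslope : κ ^ k * K + 1 / 20 ∈ Icc 0 M := by
      refine ⟨by positivity, le_trans ?_ hKM⟩
      gcongr
      exact mul_le_of_le_one_left hK (pow_le_one₀ hκ.le hr.κ_lt_one.le)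
    have hrad_le : M * min (κ⁻¹ ^ (k + 1) * ρ) (d / M) ≤ d :=
      calc M * min (κ⁻¹ ^ (k + 1) * ρ) (d / M) ≤ M * (d / M) := by gcongr; exact min_le_right _ _
        _ = d := mul_div_cancel₀ d hM0.ne'
    have hℓ := hF.pos_scale (k + 1)
    rw [hS k k.lt_succ_self, pow_succ' κ k, mul_assoc κ _ D]
    refine ((ih fun j hj ↦ hS j (hj.trans k.lt_succ_self)).scaled_step (hF.chart k) hr
      (hF.pos_scale k) hℓ (hF.scale_le k) hM hdM hslope (by positivity) (by positivity)
      (by positivity) (mul_min_inv_pow_succ_mul_le hκ hr.κ_lt_one.le (by positivity))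
      hrad_le).mono le_rfl le_rfl ?_ ?_
    · linarith [hr.η_le]
    · refine mul_le_mul_of_nonneg_right (le_of_eq ?_) hℓ.le
      field_simp
      ring

/-- The graph-transform sequence of `g` with radii `r k`; each step cuts the image of the previous
graph down to the `r (k + 1)`-ball. Its terms are sets, so that it makes sense before they are known
to be graphs. -/
def graphTransformSeq (F : ℕ → E × V → E × V) (r : ℕ → ℝ) (g : E → V) : ℕ → Set (E × V)
  | 0 => graphOver (r 0) g ∩ closedBall 0 (r 0)
  | k + 1 => F k '' graphTransformSeq F r g k ∩ closedBall 0 (r (k + 1))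

namespace HyperbolicChartSeq

variable [FiniteDimensional ℝ E] {μ ν θ κ c η r₀ r₁ K₀ a₀ ρ b D : ℝ} {ℓ : ℕ → ℝ}
  {F : ℕ → E × V → E × V} {DF : ℕ → E × V → E × V →L[ℝ] E × V} {S : ℕ → Set (E × V)} {g : E → V}
  {G : E → E →L[ℝ] V}

lemma coneGraph_initial_phase (hF : HyperbolicChartSeq μ ν θ r₀ ℓ F DF)
    (hr : GraphTransformRates μ ν θ κ c η) (hK₀ : 0 ≤ K₀) (ha₀ : 0 ≤ a₀) (hr₀ : 0 < r₀)
    (hη : r₀ * (K₀ + 1) ≤ η) (hg : C1LipOn (r₀ / ℓ 0) K₀ a₀ g G) (hg0 : g 0 = 0)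
    (hS₀ : S 0 = graphOver (r₀ / ℓ 0) g ∩ closedBall 0 (r₀ / ℓ 0)) (k : ℕ)
    (hS : ∀ j < k, S (j + 1) = F j '' S j ∩ closedBall 0 (r₀ / ℓ (j + 1))) :
    ConeGraph (r₀ / ℓ k) (r₀ / (K₀ + 1) / ℓ k) (κ ^ k * K₀ + 1 / 20)
      ((κ ^ k * a₀ + (1 + (K₀ + 1)) * (K₀ + 1) ^ 2 / (1 - κ)) * ℓ k) (κ ^ k * ‖G 0‖) (S k) := by
  have hℓ := hF.pos_scale
  have hκ := hr.pos_κ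
  have hρ : 0 < r₀ / (K₀ + 1) := by positivity
  have hρr : r₀ / (K₀ + 1) / ℓ 0 ≤ r₀ / ℓ 0 := by
    have := hℓ 0
    gcongr
    exact div_le_self hr₀.le (by linarith)
  have hKρ : K₀ * (r₀ / (K₀ + 1) / ℓ 0) ≤ r₀ / ℓ 0 := by
    have := hℓ 0
    rw [← mul_div_assoc]
    gcongr
    rw [← mul_div_assoc, div_le_iff₀ (by positivity)]
    linarith
  have h₀ : ConeGraph (r₀ / ℓ 0) (r₀ / (K₀ + 1) / ℓ 0) K₀ (a₀ * ℓ 0) ‖G 0‖ (S 0) := hS₀ ▸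
    (hg.coneGraph hK₀ hg0 (div_nonneg hρ.le (hℓ 0).le) hρr hKρ).mono le_rfl le_rfl le_rfl
      (le_mul_of_one_le_right ha₀ (hF.one_le_scale 0))
  refine (h₀.iterate hF hr (by linarith) hη hr₀ hρ hK₀ (by linarith) ha₀ k hS).mono le_rfl ?_
    le_rfl le_rfl
  have := hℓ k
  gcongr
  exact le_min (le_mul_of_one_le_left hρ.le
    (one_le_pow₀ (one_le_inv_iff₀.2 ⟨hκ, hr.κ_lt_one.le⟩))) le_rfl

lemma coneGraph_final_phase (hF : HyperbolicChartSeq μ ν θ r₁ ℓ F DF)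
    (hr : GraphTransformRates μ ν θ κ c η) (hr₁ : 0 < r₁) (hη : r₁ ≤ η) (hρ : 0 < ρ) (hb : 0 ≤ b)
    (hS : ∀ k, S (k + 1) = F k '' S k ∩ closedBall 0 (r₁ / ℓ (k + 1)))
    (hS₀ : ConeGraph (r₁ / ℓ 0) (ρ / ℓ 0) (1 / 10) (b * ℓ 0) D (S 0)) (k : ℕ) :
    ConeGraph (r₁ / ℓ k) (min (κ⁻¹ ^ k * ρ) r₁ / ℓ k) (κ ^ k * (1 / 10) + 1 / 20)
      ((κ ^ k * b + 2 / (1 - κ)) * ℓ k) (κ ^ k * D) (S k) := by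
  simpa only [div_one, one_pow, mul_one, one_add_one_eq_two] using
    hS₀.iterate hF hr le_rfl (by rwa [mul_one]) hr₁ hρ (by norm_num) (by norm_num) hb k
      fun j _ ↦ hS j

end HyperbolicChartSeq

lemma eventually_pow_mul_le {κ : ℝ} (hκ : 0 ≤ κ) (hκ1 : κ < 1) (x : ℝ) {ε : ℝ} (hε : 0 < ε) :
    ∀ᶠ j in Filter.atTop, κ ^ j * x ≤ ε := by
  have := (tendsto_pow_atTop_nhds_zero_of_lt_one hκ hκ1).mul_const x
  rw [zero_mul] at this
  exact this.eventually_le_const hε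

/-- The radii of the graph transforms: `r₀ / ℓ k` up to step `m₀`, where steep graphs only get
flatter, and `r₁ / ℓ k` afterwards, where flat graphs grow. -/
def graphTransformRadius (ℓ : ℕ → ℝ) (m₀ : ℕ) (r₀ r₁ : ℝ) (k : ℕ) : ℝ :=
  (if k ≤ m₀ then r₀ else r₁) / ℓ k

namespace HyperbolicChartSeq

variable [FiniteDimensional ℝ E] {μ ν θ κ c η r₀ r₁ K₀ a₀ : ℝ} {m₀ : ℕ} {ℓ : ℕ → ℝ}
  {F : ℕ → E × V → E × V} {DF : ℕ → E × V → E × V →L[ℝ] E × V} {g : E → V} {G : E → E →L[ℝ] V}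

lemma coneGraph_graphTransformSeq_of_le (hF : HyperbolicChartSeq μ ν θ r₀ ℓ F DF)
    (hr : GraphTransformRates μ ν θ κ c η) (hK₀ : 0 ≤ K₀) (ha₀ : 0 ≤ a₀) (hr₀ : 0 < r₀)
    (hη : r₀ * (K₀ + 1) ≤ η) (hg : C1LipOn (r₀ / ℓ 0) K₀ a₀ g G) (hg0 : g 0 = 0) {k : ℕ}
    (hk : k ≤ m₀) :
    ConeGraph (r₀ / ℓ k) (r₀ / (K₀ + 1) / ℓ k) (κ ^ k * K₀ + 1 / 20)
      ((κ ^ k * a₀ + (1 + (K₀ + 1)) * (K₀ + 1) ^ 2 / (1 - κ)) * ℓ k) (κ ^ k * ‖G 0‖)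
      (graphTransformSeq F (graphTransformRadius ℓ m₀ r₀ r₁) g k) := by
  refine hF.coneGraph_initial_phase hr hK₀ ha₀ hr₀ hη hg hg0 ?_ k fun j hj ↦ ?_
  · rw [graphTransformSeq, graphTransformRadius, if_pos m₀.zero_le]
  · rw [graphTransformSeq, graphTransformRadius, if_pos (Nat.succ_le_of_lt (hj.trans_le hk))]

lemma coneGraph_graphTransformSeq_add (hF : HyperbolicChartSeq μ ν θ r₁ ℓ F DF)
    (hr : GraphTransformRates μ ν θ κ c η) (hr₁η : r₁ ≤ η) (hK₀ : 0 ≤ K₀) (ha₀ : 0 ≤ a₀)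
    (hm₀ : κ ^ m₀ * K₀ ≤ 1 / 20) (hr₀ : 0 < r₀) (hr₀r₁ : r₀ ≤ r₁) (hr₀η : r₀ * (K₀ + 1) ≤ η)
    (hg : C1LipOn (r₀ / ℓ 0) K₀ a₀ g G) (hg0 : g 0 = 0) (j : ℕ) :
    ConeGraph (r₁ / ℓ (m₀ + j)) (min (κ⁻¹ ^ j * (r₀ / (K₀ + 1))) r₁ / ℓ (m₀ + j))
      (κ ^ j * (1 / 10) + 1 / 20)
      ((κ ^ j * (a₀ + (1 + (K₀ + 1)) * (K₀ + 1) ^ 2 / (1 - κ)) + 2 / (1 - κ)) * ℓ (m₀ + j))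
      (κ ^ (m₀ + j) * ‖G 0‖)
      (graphTransformSeq F (graphTransformRadius ℓ m₀ r₀ r₁) g (m₀ + j)) := by
  have hκ1 : 0 < 1 - κ := sub_pos.2 hr.κ_lt_one
  have hℓ := hF.pos_scale m₀
  have hm₀a₀ : κ ^ m₀ * a₀ ≤ a₀ :=
    mul_le_of_le_one_left ha₀ (pow_le_one₀ hr.pos_κ.le hr.κ_lt_one.le)
  have hstart := ((hF.mono hr₀r₁).coneGraph_graphTransformSeq_of_le (r₁ := r₁) hr hK₀ ha₀ hr₀ hr₀η
    hg hg0 (le_refl m₀)).mono (r' := r₁ / ℓ m₀) (K' := 1 / 10)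
    (a' := (a₀ + (1 + (K₀ + 1)) * (K₀ + 1) ^ 2 / (1 - κ)) * ℓ m₀) (by gcongr) le_rfl (by linarith)
    (by gcongr)
  rw [pow_add, mul_comm (κ ^ m₀), mul_assoc]
  refine (hF.shift m₀).coneGraph_final_phase
    (S := fun j ↦ graphTransformSeq F (graphTransformRadius ℓ m₀ r₀ r₁) g (m₀ + j)) hr
    (hr₀.trans_le hr₀r₁) hr₁η (by positivity) (by positivity) (fun j ↦ ?_) hstart j
  rw [← add_assoc, graphTransformSeq, graphTransformRadius, if_neg (by lia)]

end HyperbolicChartSeq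

lemma GraphTransformRates.exists_forall_coneGraph [FiniteDimensional ℝ E]
    {μ ν θ κ c η r₀ r₁ K₀ a₀ : ℝ} {m₀ : ℕ} (hr : GraphTransformRates μ ν θ κ c η) (hr₁η : r₁ ≤ η)
    (hK₀ : 0 ≤ K₀) (ha₀ : 0 ≤ a₀) (hm₀ : κ ^ m₀ * K₀ ≤ 1 / 20) (hr₀ : 0 < r₀) (hr₀r₁ : r₀ ≤ r₁)
    (hr₀η : r₀ * (K₀ + 1) ≤ η) :
    ∃ m₁, ∀ (ℓ : ℕ → ℝ) (F : ℕ → E × V → E × V) (DF : ℕ → E × V → E × V →L[ℝ] E × V),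
      HyperbolicChartSeq μ ν θ r₁ ℓ F DF →
      ∀ (g : E → V) (G : E → E →L[ℝ] V), g 0 = 0 → C1LipOn (r₀ / ℓ 0) K₀ a₀ g G →
      ∀ k, m₀ + m₁ ≤ k → ConeGraph (r₁ / ℓ k) (r₁ / ℓ k) (1 / 10) ((1 + 2 / (1 - κ)) * ℓ k)
        (κ ^ k * ‖G 0‖) (graphTransformSeq F (graphTransformRadius ℓ m₀ r₀ r₁) g k) := by
  have hκ := hr.pos_κ
  have hsmall := eventually_pow_mul_le hκ.le hr.κ_lt_one
  obtain ⟨m₁, hm₁⟩ := Filter.eventually_atTop.1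
    ((hsmall (1 / 10) (ε := 1 / 20) (by norm_num)).and
      ((hsmall (a₀ + (1 + (K₀ + 1)) * (K₀ + 1) ^ 2 / (1 - κ)) one_pos).and
        (hsmall r₁ (ε := r₀ / (K₀ + 1)) (by positivity))))
  refine ⟨m₁, fun ℓ F DF hF g G hg0 hg k hk ↦ ?_⟩
  obtain ⟨j, rfl⟩ := Nat.exists_eq_add_of_le ((Nat.le_add_right _ _).trans hk)
  obtain ⟨hslope, hcurv, hradius⟩ := hm₁ j (Nat.add_le_add_iff_left.1 hk)
  have hℓ := hF.pos_scale (m₀ + j)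
  have hfull : r₁ ≤ min (κ⁻¹ ^ j * (r₀ / (K₀ + 1))) r₁ := by
    refine le_min ?_ le_rfl
    rwa [inv_pow, le_inv_mul_iff₀ (by positivity)]
  exact (hF.coneGraph_graphTransformSeq_add hr hr₁η hK₀ ha₀ hm₀ hr₀ hr₀r₁ hr₀η hg hg0 j).mono
    le_rfl (by gcongr) (by linarith) (by gcongr)

lemma HyperbolicChartSeq.zero_mem_and_injOn_graphTransformSeq [FiniteDimensional ℝ E]
    {μ ν θ κ c η r₀ r₁ K₀ a₀ : ℝ} {m₀ : ℕ} {ℓ : ℕ → ℝ} {F : ℕ → E × V → E × V}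
    {DF : ℕ → E × V → E × V →L[ℝ] E × V} {g : E → V} {G : E → E →L[ℝ] V}
    (hF : HyperbolicChartSeq μ ν θ r₁ ℓ F DF) (hr : GraphTransformRates μ ν θ κ c η)
    (hr₁η : r₁ ≤ η) (hK₀ : 0 ≤ K₀) (ha₀ : 0 ≤ a₀) (hm₀ : κ ^ m₀ * K₀ ≤ 1 / 20) (hr₀ : 0 < r₀)
    (hr₀r₁ : r₀ ≤ r₁) (hr₀η : r₀ * (K₀ + 1) ≤ η) (hg : C1LipOn (r₀ / ℓ 0) K₀ a₀ g G)
    (hg0 : g 0 = 0) (k : ℕ) :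
    0 ∈ graphTransformSeq F (graphTransformRadius ℓ m₀ r₀ r₁) g k ∧
      InjOn Prod.fst (graphTransformSeq F (graphTransformRadius ℓ m₀ r₀ r₁) g k) := by
  have hℓ := hF.pos_scale k
  rcases le_total k m₀ with hk | hk
  · have := (hF.mono hr₀r₁).coneGraph_graphTransformSeq_of_le (r₁ := r₁) hr hK₀ ha₀ hr₀ hr₀η hg hg0
      hk
    exact ⟨this.zero_mem (by positivity), this.injOn_fst⟩
  · obtain ⟨j, rfl⟩ := Nat.exists_eq_add_of_le hk
    have := hF.coneGraph_graphTransformSeq_add hr hr₁η hK₀ ha₀ hm₀ hr₀ hr₀r₁ hr₀η hg hg0 j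
    have hκ := hr.pos_κ
    have hr₁ := hr₀.trans_le hr₀r₁
    exact ⟨this.zero_mem (by positivity), this.injOn_fst⟩

theorem iterated_graph_transform_general (E V : Type*) [NormedAddCommGroup E] [NormedSpace ℝ E]
    [FiniteDimensional ℝ E] [NormedAddCommGroup V] [NormedSpace ℝ V] {lam δ0 δ2 δ1 : ℝ}
    (hlam : 0 < lam) (hδ0 : δ0 ≤ lam / 4) (hδ2 : δ2 ≤ lam / 4) (hδ1 : 0 < δ1) :
    ∃ K0bar r1bar Cbar : ℝ, K0bar ∈ Ioc 0 (1 / 10) ∧ r1bar ∈ Ioc 0 δ1 ∧ 1 ≤ Cbar ∧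
      ∀ K0 a0 : ℝ, 0 ≤ K0 → 0 ≤ a0 → ∃ (m0 : ℕ) (r0bar : ℝ), 0 < r0bar ∧ r0bar ≤ δ1 ∧
      ∀ r0 : ℝ, 0 < r0 → r0 ≤ r0bar → ∃ m1 : ℕ,
        ∀ (ℓ : ℕ → ℝ) (F : ℕ → E × V → E × V) (DF : ℕ → E × V → E × V →L[ℝ] E × V),
          HyperbolicChartSeq (Real.exp lam) (Real.exp δ0) (Real.exp δ2) δ1 ℓ F DF →
        ∀ (g : E → V) (G : E → E →L[ℝ] V), g 0 = 0 → C1LipOn (r0 / ℓ 0) K0 a0 g G →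
          letI S := graphTransformSeq F (graphTransformRadius ℓ m0 r0 r1bar) g
          (∀ k, 0 ∈ S k ∧ InjOn Prod.fst (S k)) ∧
          ∀ k, m0 + m1 ≤ k → ∃ (gk : E → V) (Gk : E → E →L[ℝ] V),
            S k = graphOver (r1bar / ℓ k) gk ∧
            C1LipOn (r1bar / ℓ k) K0bar (Cbar * ℓ k) gk Gk ∧
            ‖Gk 0‖ ≤ Real.exp (-((k : ℝ) * lam / 2)) * ‖G 0‖ := by
  obtain ⟨η, hr⟩ := GraphTransformRates.exists_of_exp hlam hδ0 hδ2
  have hκ := hr.κ_lt_one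
  have hη := hr.pos_η
  refine ⟨1 / 10, min δ1 η, 1 + 2 / (1 - Real.exp (-(lam / 2))), by norm_num,
    ⟨lt_min hδ1 hη, min_le_left _ _⟩, le_add_of_nonneg_right (div_nonneg two_pos.le (by linarith)),
    fun K0 a0 hK0 ha0 ↦ ?_⟩
  obtain ⟨m0, hm0⟩ := (eventually_pow_mul_le hr.pos_κ.le hκ K0 (ε := 1 / 20) (by norm_num)).exists
  refine ⟨m0, min (min δ1 η) (η / (K0 + 1)), lt_min (lt_min hδ1 hη) (by positivity),
    (min_le_left _ _).trans (min_le_left _ _), fun r0 hr0 hr0bar ↦ ?_⟩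
  have hr0r1 : r0 ≤ min δ1 η := hr0bar.trans (min_le_left _ _)
  have hr0η : r0 * (K0 + 1) ≤ η :=
    (le_div_iff₀ (by positivity)).1 (hr0bar.trans (min_le_right _ _))
  obtain ⟨m1, hm1⟩ := hr.exists_forall_coneGraph (E := E) (V := V) (min_le_right δ1 η) hK0 ha0 hm0
    hr0 hr0r1 hr0η
  refine ⟨m1, fun ℓ F DF hF g G hg0 hg ↦ ?_⟩
  have hF' := hF.mono (min_le_left δ1 η)
  refine ⟨hF'.zero_mem_and_injOn_graphTransformSeq hr (min_le_right _ _) hK0 ha0 hm0 hr0 hr0r1 hr0η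
    hg hg0, fun k hk ↦ ?_⟩
  obtain ⟨gk, Gk, hSk, hgk, hGk⟩ := (hm1 ℓ F DF hF' g G hg0 hg k hk).exists_eq_graphOver
  refine ⟨gk, Gk, hSk, hgk, hGk.trans_eq ?_⟩
  rw [← Real.exp_nat_mul]
  ring_nf

end

section

variable {du dcs : ℕ}

lemma IsChartMap.hyperbolicChart {lam δ0 ℓ δ : ℝ} {f : PSp du dcs → PSp du dcs}
    {Df : PSp du dcs → (PSp du dcs →L[ℝ] PSp du dcs)} (hf : IsChartMap du dcs lam δ0 ℓ δ f Df) :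
    HyperbolicChart (Real.exp lam) (Real.exp δ0) ℓ (δ / ℓ) f Df where
  map_zero := hf.map_zero
  hasDeriv := hf.hasDeriv
  lipDeriv := hf.lipDeriv
  splitting := ⟨hf.deriv_zero_mapsU, hf.deriv_zero_mapsCs, hf.expand, hf.contract⟩

lemma isC1LipGraph_iff_c1LipOn {r K a : ℝ} {g : EuSp du → CsSp dcs}
    {Dg : EuSp du → (EuSp du →L[ℝ] CsSp dcs)} :
    IsC1LipGraph du dcs r K a g Dg ↔ C1LipOn r K a g Dg :=
  ⟨fun ⟨h₁, h₂, h₃⟩ ↦ ⟨h₁, h₂, h₃⟩, fun ⟨h₁, h₂, h₃⟩ ↦ ⟨h₁, h₂, h₃⟩⟩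

lemma hyperbolicChartSeq_of_isChartMap {lam δ0 δ2 δ1 : ℝ} {ℓ : ℕ → ℝ}
    {F : ℕ → PSp du dcs → PSp du dcs} {DF : ℕ → PSp du dcs → (PSp du dcs →L[ℝ] PSp du dcs)}
    (hℓ : ∀ k, 1 ≤ ℓ k) (hratio : ∀ k, Real.exp (-δ2) ≤ ℓ (k + 1) / ℓ k)
    (hF : ∀ k, IsChartMap du dcs lam δ0 (ℓ k) δ1 (F k) (DF k)) :
    HyperbolicChartSeq (Real.exp lam) (Real.exp δ0) (Real.exp δ2) δ1 ℓ F DF where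
  one_le_scale := hℓ
  scale_le k := by
    have hexp := hratio k
    rwa [le_div_iff₀ (one_pos.trans_le (hℓ k)), Real.exp_neg, inv_mul_le_iff₀ (Real.exp_pos _)]
      at hexp
  chart k := (hF k).hyperbolicChart

end

/-- Iterated graph transforms (Proposition 3.4): after `m₀ + m₁` steps the iterated graph
transform of a `K₀`-Lipschitz graph is defined on the full chart, is `K̄₀`-Lipschitz,
its derivative at `0` decays like `e^{-kλ/2}`, and `Lip(dg_k) ≤ C̄ ℓ_k`. -/
theorem iterated_graph_transform
    (du dcs : ℕ) (hdu : 1 ≤ du) (hdcs : 1 ≤ dcs)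
    (lam δ0 δ2 δ1 : ℝ) (hlam : 0 < lam) (hδ0 : 0 ≤ δ0) (hδ2 : 0 ≤ δ2)
    (hsmall : δ0 + δ2 < lam / 4) (hδ1 : δ1 ∈ Set.Ioo (0 : ℝ) 1) :
    ∃ K0bar r1bar Cbar : ℝ,
      K0bar ∈ Set.Ioc (0 : ℝ) (1 / 10) ∧ r1bar ∈ Set.Ioc (0 : ℝ) δ1 ∧ 1 ≤ Cbar ∧
      ∀ K0 a0 : ℝ, 0 < K0 → 0 < a0 →
      ∃ (m0 : ℕ) (r0bar : ℝ), 0 < r0bar ∧ r0bar ≤ δ1 ∧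
      ∀ r0 : ℝ, 0 < r0 → r0 ≤ r0bar →
      ∃ m1 : ℕ,
        ∀ (ℓ : ℕ → ℝ) (F : ℕ → PSp du dcs → PSp du dcs)
          (DF : ℕ → PSp du dcs → (PSp du dcs →L[ℝ] PSp du dcs)),
          (∀ k, 1 ≤ ℓ k) →
          (∀ k, Real.exp (-δ2) ≤ ℓ (k + 1) / ℓ k) →
          (∀ k, ℓ (k + 1) / ℓ k ≤ Real.exp δ2) →
          (∀ k, IsChartMap du dcs lam δ0 (ℓ k) δ1 (F k) (DF k)) →
        ∀ (g : EuSp du → CsSp dcs) (Dg : EuSp du → (EuSp du →L[ℝ] CsSp dcs)),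
          g 0 = 0 → IsC1LipGraph du dcs (r0 / ℓ 0) K0 a0 g Dg →
          ∃ S : ℕ → Set (PSp du dcs),
            -- the graph-transform sequence with radii `d_k = r0` for `k ≤ m0`,
            -- `d_k = r̄1` for `k > m0`, is well defined:
            S 0 = uGraph du dcs (r0 / ℓ 0) g ∩
              closedBall (0 : PSp du dcs) (r0 / ℓ 0) ∧
            (∀ k, S (k + 1) = (F k '' S k) ∩
              closedBall (0 : PSp du dcs)
                ((if k + 1 ≤ m0 then r0 else r1bar) / ℓ (k + 1))) ∧
            (∀ k, (∃ v : CsSp dcs, ((0 : EuSp du), v) ∈ S k) ∧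
              ∀ p ∈ S k, ∀ q ∈ S k, p.1 = q.1 → p = q) ∧
            -- and for `k ≥ m0 + m1` its terms are full graphs with the stated bounds:
            ∀ k, m0 + m1 ≤ k →
              ∃ (gk : EuSp du → CsSp dcs) (Dgk : EuSp du → (EuSp du →L[ℝ] CsSp dcs)),
                S k = uGraph du dcs (r1bar / ℓ k) gk ∧
                IsC1LipGraph du dcs (r1bar / ℓ k) K0bar (Cbar * ℓ k) gk Dgk ∧
                ‖Dgk 0‖ ≤ Real.exp (-((k : ℝ) * lam / 2)) * ‖Dg 0‖ := by
  have hδ0lam : δ0 ≤ lam / 4 := by linarith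
  have hδ2lam : δ2 ≤ lam / 4 := by linarith
  obtain ⟨K0bar, r1bar, Cbar, hK0bar, hr1bar, hCbar, hmain⟩ :=
    iterated_graph_transform_general (EuSp du) (CsSp dcs) hlam hδ0lam hδ2lam hδ1.1
  refine ⟨K0bar, r1bar, Cbar, hK0bar, hr1bar, hCbar, fun K0 a0 hK0 ha0 ↦ ?_⟩
  obtain ⟨m0, r0bar, hr0bar, hr0barδ1, hm0⟩ := hmain K0 a0 hK0.le ha0.le
  refine ⟨m0, r0bar, hr0bar, hr0barδ1, fun r0 hr0 hr0le ↦ ?_⟩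
  obtain ⟨m1, hm1⟩ := hm0 r0 hr0 hr0le
  refine ⟨m1, fun ℓ F DF hℓ hratio _ hF g Dg hg0 hg ↦
    ⟨graphTransformSeq F (graphTransformRadius ℓ m0 r0 r1bar) g, ?_, fun _ ↦ rfl, ?_⟩⟩
  · rw [graphTransformSeq, graphTransformRadius, if_pos m0.zero_le]
    rfl
  obtain ⟨hwell, htail⟩ := hm1 ℓ F DF (hyperbolicChartSeq_of_isChartMap hℓ hratio hF) g Dg hg0
    (isC1LipGraph_iff_c1LipOn.1 hg)
  refine ⟨fun k ↦ ⟨⟨0, (hwell k).1⟩, fun p hp q hq hpq ↦ (hwell k).2 hp hq hpq⟩, fun k hk ↦ ?_⟩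
  obtain ⟨gk, Gk, hSk, hgk, hGk⟩ := htail k hk
  exact ⟨gk, Gk, hSk, isC1LipGraph_iff_c1LipOn.2 hgk, hGk⟩
end
end

section
/- Fix λ > 0 and δ₀, δ₂ ≥ 0 with δ₀ + δ₂ < λ/4. There exist δ* > 0 and c ∈ (0,1), depending only on λ, δ₀, δ₂, such that for every δ ∈ (0, δ*), all ℓ, ℓ' ≥ 1 with e^{-δ₂} ≤ ℓ'/ℓ ≤ e^{δ₂}, and every hyperbolic chart map f̃ with data (λ, δ₀, ℓ, δ): (a) if g : B^u(δℓ^{-1}) → ℝ^{cs} is C^{1+Lip} with Lip(g) ≤ 1/10 and there exists z ∈ graph g with z ∈ B((1/2)δℓ^{-1}) and f̃(z) ∈ B((1/2)δ(ℓ')^{-1}), then there exists a C^{1+Lip} map 𝒯g : B^u(δ(ℓ')^{-1}) → ℝ^{cs} with graph 𝒯g ⊂ f̃(graph g) ∩ B(δ(ℓ')^{-1}) and Lip(𝒯g) ≤ 1/10; (b) if g¹, g² : B^u(δℓ^{-1}) → ℝ^{cs} are C^{1+Lip} with Lip(gⁱ) ≤ 1/10 and gⁱ(0) = 0, then the maps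 𝒯gⁱ exist, satisfy 𝒯gⁱ(0) = 0, and |𝒯g¹ − 𝒯g²|' ≤ c |g¹ − g²|', where |h|' := sup { |h(u)|/|u| : u ≠ 0 in the domain of h }. -/
open Metric Set

noncomputable section

/-!
Since `f` is `ε`-close to `A × B` in the Lipschitz sense, the base map `u ↦ (f (u, g u)).1` is
`ε`-close to the expansion `A`: it is injective with a `C^{1+Lip}` inverse, and as `ε → 0` it covers
balls larger by nearly the factor `μ`, hence the whole base of the next chart. The image of the
graph of `g` is therefore again a graph, and it keeps slope at most `κ` because differences of
points in the cone `‖v‖ ≤ κ ‖u‖` stay in that cone. For the contraction, `g₁` and `g₂` are compared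
over the same base point `u`: there the images differ by at most about `ν ‖g₁ u - g₂ u‖`, while
`‖u‖` has grown by nearly the factor `μ`, so that the ratio decreases by about `ν / μ`.
-/

open scoped NNReal

section ApproximatesLinear

variable {E F : Type*} [NormedAddCommGroup E] [NormedSpace ℝ E]
  [NormedAddCommGroup F] [NormedSpace ℝ F] {φ : E → F} {s : Set E} {μ : ℝ} {ε : ℝ≥0}

lemma mul_norm_sub_le_of_approximatesLinearOn {T : E →L[ℝ] F} (hT : ∀ v, μ * ‖v‖ ≤ ‖T v‖)
    (hφ : ApproximatesLinearOn φ T s ε) {x y : E} (hx : x ∈ s) (hy : y ∈ s) :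
    (μ - ε) * ‖x - y‖ ≤ ‖φ x - φ y‖ := by
  have hdev := hφ x hx y hy
  have htri := norm_le_norm_add_norm_sub (φ x - φ y) (T (x - y))
  linarith [hT (x - y)]

lemma injOn_of_approximatesLinearOn {T : E →L[ℝ] F} (hT : ∀ v, μ * ‖v‖ ≤ ‖T v‖)
    (hε : ε < μ) (hφ : ApproximatesLinearOn φ T s ε) : InjOn φ s := by
  intro x hx y hy hxy
  have h := mul_norm_sub_le_of_approximatesLinearOn hT hφ hx hy
  rw [hxy, sub_self, norm_zero] at h
  exact sub_eq_zero.1 (norm_le_zero_iff.1 (nonpos_of_mul_nonpos_right h (sub_pos.2 hε)))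

lemma lipschitzOnWith_rightInverse_of_approximatesLinearOn {T : E →L[ℝ] F} {ψ : F → E} {t : Set F}
    (hT : ∀ v, μ * ‖v‖ ≤ ‖T v‖) (hε : ε < μ) (hφ : ApproximatesLinearOn φ T s ε)
    (hψ : MapsTo ψ t s) (hinv : RightInvOn ψ φ t) :
    LipschitzOnWith (Real.toNNReal (μ - ε)⁻¹) ψ t := by
  have hgap : 0 < μ - ε := sub_pos.2 hε
  refine LipschitzOnWith.of_dist_le' fun w hw z hz => ?_
  have h := mul_norm_sub_le_of_approximatesLinearOn hT hφ (hψ hw) (hψ hz)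
  rw [hinv hw, hinv hz] at h
  rw [dist_eq_norm, dist_eq_norm]
  exact (le_inv_mul_iff₀ hgap).2 h

lemma surjOn_closedBall_of_approximatesLinearOn [CompleteSpace E] {A : E ≃L[ℝ] F} (hμ : 0 < μ)
    (hA : ∀ v, μ * ‖v‖ ≤ ‖A v‖) (hφ : ApproximatesLinearOn φ (A : E →L[ℝ] F) s ε)
    {b : E} {R : ℝ} (hR : 0 ≤ R) (hs : closedBall b R ⊆ s) :
    SurjOn φ (closedBall b R) (closedBall (φ b) ((μ - ε) * R)) := by
  let Ainv : (A : E →L[ℝ] F).NonlinearRightInverse :=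
    { toFun := A.symm
      nnnorm := ⟨μ⁻¹, by positivity⟩
      bound' := fun y => by
        have h := hA (A.symm y)
        rw [A.apply_symm_apply] at h
        exact (le_inv_mul_iff₀ hμ).2 h
      right_inv' := A.apply_symm_apply }
  have h := hφ.surjOn_closedBall_of_nonlinearRightInverse Ainv hR hs
  rwa [show ((Ainv.nnnorm : ℝ)⁻¹) = μ from inv_inv μ] at h

lemma isInvertible_of_norm_sub_le [CompleteSpace E] {A : E ≃L[ℝ] F} {T : E →L[ℝ] F}
    (hA : ∀ v, μ * ‖v‖ ≤ ‖A v‖) (hε : ε < μ) (hT : ‖T - (A : E →L[ℝ] F)‖ ≤ ε) :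
    T.IsInvertible := by
  have hμ : 0 < μ := ε.2.trans_lt hε
  have happrox : ApproximatesLinearOn T (A : E →L[ℝ] F) univ ε := fun x _ y _ => by
    rw [← map_sub]
    exact (T - (A : E →L[ℝ] F)).le_of_opNorm_le hT (x - y)
  have hinj : Function.Injective T :=
    injOn_univ.1 (injOn_of_approximatesLinearOn hA hε happrox)
  have hsurj : Function.Surjective T := fun w => by
    have hR : 0 ≤ ‖w‖ / (μ - ε) := div_nonneg (norm_nonneg w) (sub_pos.2 hε).le
    have h := surjOn_closedBall_of_approximatesLinearOn (b := 0) hμ hA happrox hR (subset_univ _)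
    rw [map_zero, mul_div_cancel₀ _ (sub_pos.2 hε).ne'] at h
    obtain ⟨u, -, hu⟩ := h (mem_closedBall_zero_iff.2 le_rfl)
    exact ⟨u, hu⟩
  have : CompleteSpace F := 
    (completeSpace_congr (e := A.toEquiv) A.isUniformEmbedding).1 inferInstance
  exact ⟨.ofBijective T (LinearMap.ker_eq_bot.2 hinj) (LinearMap.range_eq_top.2 hsurj), rfl⟩

lemma norm_inverse_le_of_norm_sub_le [CompleteSpace E] {A : E ≃L[ℝ] F} {T : E →L[ℝ] F}
    (hA : ∀ v, μ * ‖v‖ ≤ ‖A v‖) (hε : ε < μ) (hT : ‖T - (A : E →L[ℝ] F)‖ ≤ ε) :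
    ‖T.inverse‖ ≤ (μ - ε)⁻¹ := by
  have hgap : 0 < μ - ε := sub_pos.2 hε
  refine ContinuousLinearMap.opNorm_le_bound _ (by positivity) fun w => ?_
  have hexpand : (μ - ε) * ‖T.inverse w‖ ≤ ‖T (T.inverse w)‖ := by
    have hdev := (T - (A : E →L[ℝ] F)).le_of_opNorm_le hT (T.inverse w)
    have htri := norm_le_norm_add_norm_sub (T (T.inverse w)) (A (T.inverse w))
    rw [sub_apply, ContinuousLinearEquiv.coe_coe] at hdev
    linarith [hA (T.inverse w)]
  rw [(isInvertible_of_norm_sub_le hA hε hT).self_apply_inverse] at hexpand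
  exact (le_inv_mul_iff₀ hgap).2 hexpand

lemma norm_inverse_sub_inverse_le {S T : E →L[ℝ] F} (hS : S.IsInvertible) (hT : T.IsInvertible) :
    ‖S.inverse - T.inverse‖ ≤ ‖S.inverse‖ * ‖S - T‖ * ‖T.inverse‖ := by
  have hresolvent : S.inverse - T.inverse = S.inverse ∘L (T - S) ∘L T.inverse := by
    ext w
    simp [hS.inverse_apply_self, hT.self_apply_inverse]
  rw [hresolvent, norm_sub_rev S T, mul_assoc]
  refine (ContinuousLinearMap.opNorm_comp_le _ _).trans ?_
  gcongr
  exact ContinuousLinearMap.opNorm_comp_le _ _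

lemma norm_sub_le_of_approximatesLinearOn {φ' : E → E →L[ℝ] F} {T : E →L[ℝ] F}
    (hs : s ⊆ closure (interior s)) (hφ' : ∀ x ∈ s, HasFDerivWithinAt φ (φ' x) s x)
    (hcont : ContinuousOn φ' s) (hφ : ApproximatesLinearOn φ T s ε) {x : E} (hx : x ∈ s) :
    ‖φ' x - T‖ ≤ ε := by
  have hinterior : ∀ y ∈ interior s, ‖φ' y - T‖ ≤ ε := fun y hy => by
    have hnhds := mem_interior_iff_mem_nhds.1 hy
    exact (((hφ' y (interior_subset hy)).hasFDerivAt hnhds).sub T.hasFDerivAt).le_of_lipschitzOn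
      hnhds hφ.lipschitzOnWith
  have hlim : ContinuousWithinAt (fun y => ‖φ' y - T‖) (interior s) x :=
    (((hcont x hx).mono interior_subset).sub continuousWithinAt_const).norm
  exact hlim.closure_le (hs hx) continuousWithinAt_const hinterior

end ApproximatesLinear

section C1Lip

variable {E F G : Type*} [NormedAddCommGroup E] [NormedSpace ℝ E]
  [NormedAddCommGroup F] [NormedSpace ℝ F] [NormedAddCommGroup G] [NormedSpace ℝ G]

/-- `f` is of class `C^{1+Lip}` on `s`: it is differentiable within `s` with a derivative that is
Lipschitz on `s`. The derivative is existentially quantified, so that no choice is needed where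
derivatives within `s` are not unique. -/
def IsC1LipOn (f : E → F) (s : Set E) : Prop :=
  ∃ f' : E → E →L[ℝ] F, (∀ x ∈ s, HasFDerivWithinAt f (f' x) s x) ∧
    ∃ K, LipschitzOnWith K f' s

lemma exists_norm_le_of_lipschitzOnWith {X V : Type*} [PseudoMetricSpace X]
    [SeminormedAddCommGroup V] {f : X → V} {s : Set X} {K : ℝ≥0} (hs : Bornology.IsBounded s)
    (hf : LipschitzOnWith K f s) : ∃ C : ℝ≥0, ∀ x ∈ s, ‖f x‖ ≤ C := by
  obtain rfl | ⟨x₀, hx₀⟩ := s.eq_empty_or_nonempty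
  · exact ⟨0, fun x hx => hx.elim⟩
  refine ⟨‖f x₀‖₊ + K * ⟨diam s, diam_nonneg⟩, fun x hx => ?_⟩
  calc ‖f x‖ ≤ ‖f x₀‖ + dist (f x) (f x₀) := by
        rw [dist_eq_norm]; exact norm_le_norm_add_norm_sub' _ _
    _ ≤ ‖f x₀‖ + K * diam s := by
        gcongr
        exact (hf.dist_le_mul x hx x₀ hx₀).trans (by gcongr; exact dist_le_diam_of_mem hs hx hx₀)

lemma exists_lipschitzOnWith_comp {X : Type*} [PseudoMetricSpace X] {s : Set X}
    {P : X → F →L[ℝ] G} {Q : X → E →L[ℝ] F} {K L : ℝ≥0} (hs : Bornology.IsBounded s)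
    (hP : LipschitzOnWith K P s) (hQ : LipschitzOnWith L Q s) :
    ∃ M, LipschitzOnWith M (fun x => P x ∘L Q x) s := by
  obtain ⟨a, ha⟩ := exists_norm_le_of_lipschitzOnWith hs hP
  obtain ⟨b, hb⟩ := exists_norm_le_of_lipschitzOnWith hs hQ
  refine ⟨a * L + K * b, LipschitzOnWith.of_dist_le_mul fun x hx y hy => ?_⟩
  have hPxy := hP.dist_le_mul x hx y hy
  have hQxy := hQ.dist_le_mul x hx y hy
  rw [dist_eq_norm] at hPxy hQxy ⊢
  calc ‖P x ∘L Q x - P y ∘L Q y‖ = ‖P x ∘L (Q x - Q y) + (P x - P y) ∘L Q y‖ := by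
        rw [ContinuousLinearMap.comp_sub, ContinuousLinearMap.sub_comp, sub_add_sub_cancel]
    _ ≤ ‖P x‖ * ‖Q x - Q y‖ + ‖P x - P y‖ * ‖Q y‖ :=
        norm_add_le_of_le (ContinuousLinearMap.opNorm_comp_le _ _)
          (ContinuousLinearMap.opNorm_comp_le _ _)
    _ ≤ a * (L * dist x y) + K * dist x y * b := by
        gcongr
        exacts [ha x hx, hb y hy]
    _ = (a * L + K * b : ℝ≥0) * dist x y := by push_cast; ring

namespace IsC1LipOn

variable {f : E → F} {s : Set E}

protected lemma id (s : Set E) : IsC1LipOn (fun x : E => x) s :=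
  ⟨fun _ => .id ℝ E, fun x _ => hasFDerivWithinAt_id x s, 0,
    (LipschitzWith.const _).lipschitzOnWith⟩

lemma continuousLinearMap_comp (L : F →L[ℝ] G) (hf : IsC1LipOn f s) :
    IsC1LipOn (fun x => L (f x)) s := by
  obtain ⟨f', hf', K, hK⟩ := hf
  exact ⟨fun x => L ∘L f' x, fun x hx => L.hasFDerivAt.comp_hasFDerivWithinAt x (hf' x hx),
    _, (ContinuousLinearMap.compL ℝ E F G L).lipschitz.comp_lipschitzOnWith hK⟩

lemma prodMk {g : E → G} (hf : IsC1LipOn f s) (hg : IsC1LipOn g s) :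
    IsC1LipOn (fun x => (f x, g x)) s := by
  obtain ⟨f', hf', K, hK⟩ := hf
  obtain ⟨g', hg', L, hL⟩ := hg
  refine ⟨fun x => (f' x).prod (g' x), fun x hx => (hf' x hx).prodMk (hg' x hx), max K L,
    LipschitzOnWith.of_dist_le_mul fun x hx y hy => ?_⟩
  have hdist := (hK.prodMk hL).dist_le_mul x hx y hy
  rw [dist_eq_norm] at hdist ⊢
  have hsub : (f' x).prod (g' x) - (f' y).prod (g' y) = (f' x - f' y).prod (g' x - g' y) := rfl
  rwa [hsub, ContinuousLinearMap.opNorm_prod]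

protected lemma comp {g : F → G} {t : Set F} {K : ℝ≥0} (hg : IsC1LipOn g t) (hf : IsC1LipOn f s)
    (hs : Bornology.IsBounded s) (hfK : LipschitzOnWith K f s) (hst : MapsTo f s t) :
    IsC1LipOn (fun x => g (f x)) s := by
  obtain ⟨f', hf', K', hK'⟩ := hf
  obtain ⟨g', hg', L', hL'⟩ := hg
  exact ⟨fun x => g' (f x) ∘L f' x, fun x hx => (hg' _ (hst hx)).comp x (hf' x hx) hst,
    exists_lipschitzOnWith_comp hs (hL'.comp hfK hst) hK'⟩

/-- The derivatives of `φ` are as close to `A` as `φ` itself is, hence they are invertible with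
inverses bounded by `(μ - ε)⁻¹`. -/
lemma rightInverse [CompleteSpace E] {φ : E → F} {ψ : F → E} {t : Set F} {A : E ≃L[ℝ] F} {μ : ℝ}
    {ε : ℝ≥0} (hφ : IsC1LipOn φ s) (hs : s ⊆ closure (interior s))
    (hA : ∀ v, μ * ‖v‖ ≤ ‖A v‖) (hε : ε < μ)
    (happrox : ApproximatesLinearOn φ (A : E →L[ℝ] F) s ε) (hψ : MapsTo ψ t s)
    (hinv : RightInvOn ψ φ t) : IsC1LipOn ψ t := by
  obtain ⟨φ', hφ', L, hL⟩ := hφ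
  obtain ⟨K, hψK⟩ : ∃ K, LipschitzOnWith K ψ t :=
    ⟨_, lipschitzOnWith_rightInverse_of_approximatesLinearOn hA hε happrox hψ hinv⟩
  have hclose : ∀ x ∈ s, ‖φ' x - A‖ ≤ ε := fun x hx =>
    norm_sub_le_of_approximatesLinearOn hs hφ' hL.continuousOn happrox hx
  have hunit : ∀ x ∈ s, (φ' x).IsInvertible := fun x hx =>
    isInvertible_of_norm_sub_le hA hε (hclose x hx)
  obtain ⟨C, hC⟩ : ∃ C : ℝ≥0, ∀ x ∈ s, ‖(φ' x).inverse‖ ≤ C :=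
    ⟨⟨(μ - ε)⁻¹, inv_nonneg.2 (sub_pos.2 hε).le⟩, fun x hx =>
      norm_inverse_le_of_norm_sub_le hA hε (hclose x hx)⟩
  have hφ'ψ : LipschitzOnWith (L * K) (fun w => φ' (ψ w)) t := hL.comp hψK hψ
  refine ⟨fun w => (φ' (ψ w)).inverse, fun w hw => ?_, C * (L * K) * C,
    LipschitzOnWith.of_dist_le_mul fun w hw z hz => ?_⟩
  · exact (hφ' _ (hψ hw)).of_comp_of_leftInverse
      ((hψK.continuousOn w hw).tendsto_nhdsWithin hψ)
      (hasFDerivWithinAt_id w t) (eventually_mem_nhdsWithin.mono hinv)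
      (hunit _ (hψ hw)).inverse_apply_self hw
  · have hdist := hφ'ψ.dist_le_mul w hw z hz
    rw [dist_eq_norm] at hdist ⊢
    calc _ ≤ ‖(φ' (ψ w)).inverse‖ * ‖φ' (ψ w) - φ' (ψ z)‖ * ‖(φ' (ψ z)).inverse‖ :=
          norm_inverse_sub_inverse_le (hunit _ (hψ hw)) (hunit _ (hψ hz))
      _ ≤ C * ((L * K : ℝ≥0) * dist w z) * C := by
          gcongr
          exacts [hC _ (hψ hw), hC _ (hψ hz)]
      _ = (C * (L * K) * C : ℝ≥0) * dist w z := by push_cast; ring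

end IsC1LipOn

end C1Lip

section GraphTransform

variable {E F : Type*} {f : E × F → E × F} {g : E → F} {s t : Set E}

/-- The action of `f` on the graph of `g`, read in the base coordinate. -/
def baseMap (f : E × F → E × F) (g : E → F) (u : E) : E := (f (u, g u)).1

/-- The graph transform of `g`: the function whose graph is the image under `f` of the graph of `g`
over `s`. Its values at points that `baseMap f g` does not cover are junk. -/
def graphTransform [Nonempty E] (f : E × F → E × F) (s : Set E) (g : E → F) (w : E) : F :=
  let u := Function.invFunOn (baseMap f g) s w
  (f (u, g u)).2

variable [Nonempty E]

lemma graphTransform_baseMap (hinj : InjOn (baseMap f g) s) {u : E} (hu : u ∈ s) :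
    graphTransform f s g (baseMap f g u) = (f (u, g u)).2 := by
  rw [graphTransform, hinj.leftInvOn_invFunOn hu]

lemma exists_apply_graph_eq_graphTransform (hcover : SurjOn (baseMap f g) s t) {w : E}
    (hw : w ∈ t) :
    ∃ u ∈ s, f (u, g u) = (w, graphTransform f s g w) :=
  ⟨_, hcover.mapsTo_invFunOn hw, Prod.ext (hcover.rightInvOn_invFunOn hw) rfl⟩

lemma graphOn_graphTransform_subset (hcover : SurjOn (baseMap f g) s t) :
    t.graphOn (graphTransform f s g) ⊆ f '' s.graphOn g := by
  rintro _ ⟨w, hw, rfl⟩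
  obtain ⟨u, hu, hfu⟩ := exists_apply_graph_eq_graphTransform hcover hw
  exact ⟨_, mem_image_of_mem _ hu, hfu⟩

end GraphTransform

section Admissible

variable {E F : Type*} [NormedAddCommGroup E] [NormedAddCommGroup F] {r : ℝ} {κ : ℝ≥0} {g : E → F}

/-- The graph of `g` over the ball of radius `r` is admissible: it has slope at most `κ` and lies
in the ball of radius `r` of the product. -/
structure IsAdmissible (κ : ℝ≥0) (r : ℝ) (g : E → F) : Prop where
  lip : LipschitzOnWith κ g (closedBall 0 r)
  mapsTo : MapsTo g (closedBall 0 r) (closedBall 0 r)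

namespace IsAdmissible

lemma of_mem_closedBall_half (hκ : κ ≤ 1 / 3) (hg : LipschitzOnWith κ g (closedBall 0 r)) {u₀ : E}
    (hu₀ : (u₀, g u₀) ∈ closedBall (0 : E × F) (r / 2)) : IsAdmissible κ r g := by
  refine ⟨hg, fun u hu => ?_⟩
  rw [mem_closedBall_zero_iff] at hu hu₀ ⊢
  obtain ⟨hu₀, hgu₀⟩ : ‖u₀‖ ≤ r / 2 ∧ ‖g u₀‖ ≤ r / 2 := norm_prod_le_iff.1 hu₀
  have hu₀r : ‖u₀‖ ≤ r := by linarith [norm_nonneg u₀]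
  have hκ' : (κ : ℝ) ≤ 1 / 3 := by exact_mod_cast hκ
  calc ‖g u‖ ≤ ‖g u₀‖ + ‖g u - g u₀‖ := norm_le_norm_add_norm_sub' _ _
    _ ≤ ‖g u₀‖ + κ * ‖u - u₀‖ := by
        gcongr
        exact hg.norm_sub_le (mem_closedBall_zero_iff.2 hu) (mem_closedBall_zero_iff.2 hu₀r)
    _ ≤ r / 2 + 1 / 3 * (r + r / 2) := by
        gcongr
        exact norm_sub_le_of_le hu hu₀
    _ = r := by ring

lemma mapsTo_graph (hg : IsAdmissible κ r g) :
    MapsTo (fun u => (u, g u)) (closedBall 0 r) (closedBall (0 : E × F) r) := fun u hu => by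
  rw [← Prod.mk_zero_zero, ← closedBall_prod_same]
  exact ⟨hu, hg.mapsTo hu⟩

lemma lipschitzOnWith_graph (hκ : κ ≤ 1) (hg : IsAdmissible κ r g) :
    LipschitzOnWith 1 (fun u => (u, g u)) (closedBall 0 r) :=
  (LipschitzWith.id.lipschitzOnWith.prodMk hg.lip).weaken (max_le le_rfl hκ)

end IsAdmissible

end Admissible

section HyperbolicPerturbation

variable {E F : Type*} [NormedAddCommGroup E] [NormedSpace ℝ E]
  [NormedAddCommGroup F] [NormedSpace ℝ F] {A : E ≃L[ℝ] E} {B : F →L[ℝ] F} {μ ν r r' : ℝ}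
  {ε κ : ℝ≥0} {f : E × F → E × F} {g : E → F}

/-- The graph of `ghat` over the ball of radius `r'` is a `C^{1+Lip}` piece of slope at most `κ` of
the image under `f` of the graph of `g` over the ball of radius `r`. -/
structure IsTransformedGraph (f : E × F → E × F) (κ : ℝ≥0) (r r' : ℝ) (g ghat : E → F) : Prop where
  isC1LipOn : IsC1LipOn ghat (closedBall 0 r')
  lip : LipschitzOnWith κ ghat (closedBall 0 r')
  graphOn_subset :
    (closedBall 0 r').graphOn ghat ⊆ f '' (closedBall 0 r).graphOn g ∩ closedBall 0 r'

/-- The map `f` is an `ε`-perturbation of the block-diagonal map `A × B` on the ball of radius `r`,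
where `A` expands by at least `μ` and `B` expands by at most `ν`; it models a chart map near a
hyperbolic orbit, with `A × B` its derivative at `0`. -/
structure IsHyperbolicPerturbation (A : E ≃L[ℝ] E) (B : F →L[ℝ] F) (μ ν : ℝ) (ε : ℝ≥0) (r : ℝ)
    (f : E × F → E × F) : Prop where
  map_zero : f 0 = 0
  expand : ∀ u, μ * ‖u‖ ≤ ‖A u‖
  bound : ∀ v, ‖B v‖ ≤ ν * ‖v‖
  approx : ApproximatesLinearOn f ((A : E →L[ℝ] E).prodMap B) (closedBall 0 r) ε

namespace IsHyperbolicPerturbation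

lemma norm_fst_sub_fst_sub_le (hf : IsHyperbolicPerturbation A B μ ν ε r f) {z y : E × F}
    (hz : z ∈ closedBall 0 r) (hy : y ∈ closedBall 0 r) :
    ‖(f z).1 - (f y).1 - A (z.1 - y.1)‖ ≤ ε * ‖z - y‖ :=
  (norm_fst_le _).trans (hf.approx z hz y hy)

lemma norm_snd_sub_snd_le (hf : IsHyperbolicPerturbation A B μ ν ε r f) {z y : E × F}
    (hz : z ∈ closedBall 0 r) (hy : y ∈ closedBall 0 r) :
    ‖(f z).2 - (f y).2‖ ≤ ν * ‖z.2 - y.2‖ + ε * ‖z - y‖ := by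
  have hdev : ‖(f z).2 - (f y).2 - B (z.2 - y.2)‖ ≤ ε * ‖z - y‖ :=
    (norm_snd_le _).trans (hf.approx z hz y hy)
  have htri := norm_le_norm_add_norm_sub' ((f z).2 - (f y).2) (B (z.2 - y.2))
  linarith [hf.bound (z.2 - y.2)]

lemma approximatesLinearOn_baseMap (hf : IsHyperbolicPerturbation A B μ ν ε r f) (hκ : κ ≤ 1)
    (hg : IsAdmissible κ r g) :
    ApproximatesLinearOn (baseMap f g) (A : E →L[ℝ] E) (closedBall 0 r) ε := fun x hx y hy => by
  refine (hf.norm_fst_sub_fst_sub_le (hg.mapsTo_graph hx) (hg.mapsTo_graph hy)).trans ?_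
  gcongr
  simpa using (hg.lipschitzOnWith_graph hκ).norm_sub_le hx hy

/-- Invariance of the cone of slope `κ` around the expanding direction. -/
lemma norm_snd_sub_snd_le_mul_baseMap_sub (hf : IsHyperbolicPerturbation A B μ ν ε r f)
    (hν : 0 ≤ ν) (hκ : κ ≤ 1) (hcone : ν * κ + ε ≤ κ * (μ - ε)) (hg : IsAdmissible κ r g) {x y : E}
    (hx : x ∈ closedBall 0 r) (hy : y ∈ closedBall 0 r) :
    ‖(f (x, g x)).2 - (f (y, g y)).2‖ ≤ κ * ‖baseMap f g x - baseMap f g y‖ := by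
  have hgraph : ‖(x, g x) - (y, g y)‖ ≤ ‖x - y‖ := by
    simpa using (hg.lipschitzOnWith_graph hκ).norm_sub_le hx hy
  calc _ ≤ ν * ‖g x - g y‖ + ε * ‖(x, g x) - (y, g y)‖ :=
        hf.norm_snd_sub_snd_le (hg.mapsTo_graph hx) (hg.mapsTo_graph hy)
    _ ≤ ν * (κ * ‖x - y‖) + ε * ‖x - y‖ := by
        gcongr
        exact hg.lip.norm_sub_le hx hy
    _ = (ν * κ + ε) * ‖x - y‖ := by ring
    _ ≤ κ * (μ - ε) * ‖x - y‖ := by gcongr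
    _ = κ * ((μ - ε) * ‖x - y‖) := by ring
    _ ≤ κ * ‖baseMap f g x - baseMap f g y‖ := by
        gcongr
        exact mul_norm_sub_le_of_approximatesLinearOn hf.expand
          (hf.approximatesLinearOn_baseMap hκ hg) hx hy

lemma injOn_baseMap (hf : IsHyperbolicPerturbation A B μ ν ε r f) (hκ : κ ≤ 1) (hε : ε < μ)
    (hg : IsAdmissible κ r g) : InjOn (baseMap f g) (closedBall 0 r) :=
  injOn_of_approximatesLinearOn hf.expand hε (hf.approximatesLinearOn_baseMap hκ hg)

lemma surjOn_baseMap [CompleteSpace E] (hf : IsHyperbolicPerturbation A B μ ν ε r f)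
    (hκ : κ ≤ 1) (hε : ε < μ) (hr : 0 ≤ r) (hr' : r' + 2 * ε * r ≤ μ * r)
    (hg : IsAdmissible κ r g) : SurjOn (baseMap f g) (closedBall 0 r) (closedBall 0 r') := by
  have hzero : ‖baseMap f g 0‖ ≤ ε * r := by
    have hdev := hf.norm_fst_sub_fst_sub_le (hg.mapsTo_graph (mem_closedBall_self hr))
      (mem_closedBall_self hr)
    have hg0 := mem_closedBall_zero_iff.1 (hg.mapsTo_graph (mem_closedBall_self hr))
    simp only [hf.map_zero, Prod.fst_zero, sub_zero, _root_.map_zero] at hdev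
    exact hdev.trans (by gcongr)
  refine (surjOn_closedBall_of_approximatesLinearOn (ε.2.trans_lt hε) hf.expand
    (hf.approximatesLinearOn_baseMap hκ hg) hr subset_rfl).mono subset_rfl
    (closedBall_subset_closedBall' ?_)
  rw [dist_zero_left]
  linarith

lemma graphTransform_zero (hf : IsHyperbolicPerturbation A B μ ν ε r f) (hκ : κ ≤ 1) (hε : ε < μ)
    (hr : 0 ≤ r) (hg : IsAdmissible κ r g) (hg0 : g 0 = 0) :
    graphTransform f (closedBall 0 r) g 0 = 0 := by
  have h := graphTransform_baseMap (hf.injOn_baseMap hκ hε hg) (mem_closedBall_self hr)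
  have hf0 : f (0, g 0) = 0 := by rw [hg0]; exact hf.map_zero
  rwa [baseMap, hf0] at h

lemma lipschitzOnWith_graphTransform (hf : IsHyperbolicPerturbation A B μ ν ε r f)
    (hν : 0 ≤ ν) (hκ : κ ≤ 1) (hcone : ν * κ + ε ≤ κ * (μ - ε)) (hg : IsAdmissible κ r g)
    (hcover : SurjOn (baseMap f g) (closedBall 0 r) (closedBall 0 r')) :
    LipschitzOnWith κ (graphTransform f (closedBall 0 r) g) (closedBall 0 r') := by
  refine LipschitzOnWith.of_dist_le_mul fun w hw z hz => ?_
  obtain ⟨x, hx, hfx⟩ := exists_apply_graph_eq_graphTransform hcover hw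
  obtain ⟨y, hy, hfy⟩ := exists_apply_graph_eq_graphTransform hcover hz
  have h := hf.norm_snd_sub_snd_le_mul_baseMap_sub hν hκ hcone hg hx hy
  rwa [baseMap, baseMap, hfx, hfy, ← dist_eq_norm, ← dist_eq_norm] at h

lemma isC1LipOn_graphTransform [CompleteSpace E] (hf : IsHyperbolicPerturbation A B μ ν ε r f)
    (hκ : κ ≤ 1) (hε : ε < μ) (hr : r ≠ 0) (hg : IsAdmissible κ r g)
    (hf1 : IsC1LipOn f (closedBall 0 r)) (hg1 : IsC1LipOn g (closedBall 0 r))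
    (hcover : SurjOn (baseMap f g) (closedBall 0 r) (closedBall 0 r')) :
    IsC1LipOn (graphTransform f (closedBall 0 r) g) (closedBall 0 r') := by
  have himage : IsC1LipOn (fun u => f (u, g u)) (closedBall 0 r) :=
    hf1.comp ((IsC1LipOn.id _).prodMk hg1) isBounded_closedBall (hg.lipschitzOnWith_graph hκ)
      hg.mapsTo_graph
  have hbase : IsC1LipOn (baseMap f g) (closedBall 0 r) :=
    himage.continuousLinearMap_comp (ContinuousLinearMap.fst ℝ E F)
  have hfiber : IsC1LipOn (fun u => (f (u, g u)).2) (closedBall 0 r) :=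
    himage.continuousLinearMap_comp (ContinuousLinearMap.snd ℝ E F)
  have hinterior : closedBall (0 : E) r ⊆ closure (interior (closedBall 0 r)) := by
    rw [interior_closedBall _ hr, closure_ball _ hr]
  have happrox := hf.approximatesLinearOn_baseMap hκ hg
  exact hfiber.comp
    (hbase.rightInverse hinterior hf.expand hε happrox hcover.mapsTo_invFunOn
      hcover.rightInvOn_invFunOn)
    isBounded_closedBall
    (lipschitzOnWith_rightInverse_of_approximatesLinearOn hf.expand hε happrox
      hcover.mapsTo_invFunOn hcover.rightInvOn_invFunOn)
    hcover.mapsTo_invFunOn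

lemma isTransformedGraph_graphTransform [CompleteSpace E]
    (hf : IsHyperbolicPerturbation A B μ ν ε r f) (hν : 0 ≤ ν) (hκ : κ ≤ 1 / 3) (hε : ε < μ)
    (hcone : ν * κ + ε ≤ κ * (μ - ε)) (hr : 0 < r) (hr' : r' + 2 * ε * r ≤ μ * r)
    (hf1 : IsC1LipOn f (closedBall 0 r)) (hg1 : IsC1LipOn g (closedBall 0 r))
    (hg : LipschitzOnWith κ g (closedBall 0 r)) {u : E} (hu : (u, g u) ∈ closedBall 0 (r / 2))
    (hfu : f (u, g u) ∈ closedBall 0 (r' / 2)) :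
    IsTransformedGraph f κ r r' g (graphTransform f (closedBall 0 r) g) := by
  have hκ1 : κ ≤ 1 := hκ.trans (by bound)
  have hadm : IsAdmissible κ r g := .of_mem_closedBall_half hκ hg hu
  have hcover := hf.surjOn_baseMap hκ1 hε hr.le hr' hadm
  have hlip := hf.lipschitzOnWith_graphTransform hν hκ1 hcone hadm hcover
  have hur : u ∈ closedBall 0 r := by
    have hunorm := (norm_fst_le (u, g u)).trans (mem_closedBall_zero_iff.1 hu)
    exact mem_closedBall_zero_iff.2 (hunorm.trans (by linarith))
  have hvalue : graphTransform f (closedBall 0 r) g (f (u, g u)).1 = (f (u, g u)).2 :=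
    graphTransform_baseMap (hf.injOn_baseMap hκ1 hε hadm) hur
  have hadm' : IsAdmissible κ r' (graphTransform f (closedBall 0 r) g) :=
    .of_mem_closedBall_half hκ hlip (by rwa [hvalue])
  exact ⟨hf.isC1LipOn_graphTransform hκ1 hε hr.ne' hadm hf1 hg1 hcover, hlip,
    subset_inter (graphOn_graphTransform_subset hcover) hadm'.mapsTo_graph.image_subset⟩

/-- If `f (u₂, g₂ u₂)` lies over `w`, then `f (u₂, g₁ u₂)` is a point of the image of the graph of
`g₁` that is close to it, and the slope bound carries it back over `w`. -/
lemma norm_graphTransform_sub_le (hf : IsHyperbolicPerturbation A B μ ν ε r f)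
    (hν : 0 ≤ ν) (hκ : κ ≤ 1) (hε : ε < μ) (hcone : ν * κ + ε ≤ κ * (μ - ε)) {g₁ g₂ : E → F}
    (hg₁ : IsAdmissible κ r g₁) (hg₂ : IsAdmissible κ r g₂)
    (hcover₁ : SurjOn (baseMap f g₁) (closedBall 0 r) (closedBall 0 r'))
    (hcover₂ : SurjOn (baseMap f g₂) (closedBall 0 r) (closedBall 0 r')) (hg₂0 : g₂ 0 = 0)
    {b : ℝ} (hb : 0 ≤ b) (hgb : ∀ u ∈ closedBall 0 r, ‖g₁ u - g₂ u‖ ≤ b * ‖u‖) {w : E}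
    (hw : w ∈ closedBall 0 r') :
    ‖graphTransform f (closedBall 0 r) g₁ w - graphTransform f (closedBall 0 r) g₂ w‖ ≤
      (ν + 2 * ε) / (μ - ε) * b * ‖w‖ := by
  obtain ⟨u₁, hu₁, hfu₁⟩ := exists_apply_graph_eq_graphTransform hcover₁ hw
  obtain ⟨u₂, hu₂, hfu₂⟩ := exists_apply_graph_eq_graphTransform hcover₂ hw
  have hr : 0 ≤ r := (norm_nonneg u₂).trans (mem_closedBall_zero_iff.1 hu₂)
  have hdist : ‖(u₂, g₁ u₂) - (u₂, g₂ u₂)‖ ≤ b * ‖u₂‖ := by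
    simpa [Prod.norm_def] using hgb u₂ hu₂
  have hz₁ := hg₁.mapsTo_graph hu₂
  have hz₂ := hg₂.mapsTo_graph hu₂
  have hbase : ‖w - (f (u₂, g₁ u₂)).1‖ ≤ ε * (b * ‖u₂‖) := by
    have h := hf.norm_fst_sub_fst_sub_le hz₁ hz₂
    rw [sub_self, _root_.map_zero, sub_zero, hfu₂, norm_sub_rev] at h
    exact h.trans (by gcongr)
  have hfiber : ‖(f (u₂, g₁ u₂)).2 - graphTransform f (closedBall 0 r) g₂ w‖ ≤
      (ν + ε) * (b * ‖u₂‖) := by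
    have h := hf.norm_snd_sub_snd_le hz₁ hz₂
    rw [hfu₂] at h
    refine h.trans ?_
    rw [add_mul]
    gcongr
    exact hgb u₂ hu₂
  have hslope : ‖graphTransform f (closedBall 0 r) g₁ w - (f (u₂, g₁ u₂)).2‖ ≤ ε * (b * ‖u₂‖) := by
    have h := hf.norm_snd_sub_snd_le_mul_baseMap_sub hν hκ hcone hg₁ hu₁ hu₂
    rw [baseMap, baseMap, hfu₁] at h
    exact (h.trans (mul_le_of_le_one_left (norm_nonneg _) (by exact_mod_cast hκ))).trans hbase
  have hu₂w : ‖u₂‖ ≤ ‖w‖ / (μ - ε) := by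
    have h := mul_norm_sub_le_of_approximatesLinearOn hf.expand
      (hf.approximatesLinearOn_baseMap hκ hg₂) hu₂ (mem_closedBall_self hr)
    have hf0 : f (0, g₂ 0) = 0 := by rw [hg₂0]; exact hf.map_zero
    rw [baseMap, baseMap, hfu₂, hf0, sub_zero, Prod.fst_zero, sub_zero] at h
    exact (le_div_iff₀' (sub_pos.2 hε)).2 h
  calc _ ≤ ε * (b * ‖u₂‖) + (ν + ε) * (b * ‖u₂‖) :=
        (norm_sub_le_norm_sub_add_norm_sub _ _ _).trans (add_le_add hslope hfiber)
    _ = (ν + 2 * ε) * (b * ‖u₂‖) := by ring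
    _ ≤ (ν + 2 * ε) * (b * (‖w‖ / (μ - ε))) := by gcongr
    _ = (ν + 2 * ε) / (μ - ε) * b * ‖w‖ := by ring

end IsHyperbolicPerturbation

end HyperbolicPerturbation

lemma exists_smallness_constants {μ ν ρ κ : ℝ} (hν : 0 ≤ ν) (hνμ : ν < μ) (hρμ : ρ < μ)
    (hκ₀ : 0 < κ) (hκ : κ ≤ 1 / 3) :
    ∃ εstar c : ℝ, 0 < εstar ∧ c ∈ Ioo 0 1 ∧ ∀ ε, 0 ≤ ε → ε < εstar →
      ε < μ ∧ ν * κ + ε ≤ κ * (μ - ε) ∧ ρ + 2 * ε ≤ μ ∧ (ν + 2 * ε) / (μ - ε) ≤ c := by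
  obtain ⟨gap, hgap, hνgap, hρgap⟩ : ∃ gap, 0 < gap ∧ ν + gap ≤ μ ∧ ρ + gap ≤ μ :=
    ⟨μ - max ν ρ, sub_pos.2 (max_lt hνμ hρμ), by linarith [le_max_left ν ρ],
      by linarith [le_max_right ν ρ]⟩
  have hκgap : κ * gap ≤ 1 / 3 * gap := by gcongr
  have hεstar : 0 < κ * gap / 4 := by positivity
  have hden : 0 < μ - κ * gap / 4 := by linarith
  refine ⟨κ * gap / 4, (ν + 2 * (κ * gap / 4)) / (μ - κ * gap / 4), hεstar,
    ⟨by positivity, (div_lt_one hden).2 (by linarith)⟩, fun ε hε₀ hε => ⟨by linarith, ?_,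
      by linarith, by gcongr⟩⟩
  have hκε : κ * ε ≤ 1 / 3 * ε := by gcongr
  have hκνgap : κ * (ν + gap) ≤ κ * μ := by gcongr
  linarith

theorem graph_transform_exists_and_contracts_general {E F : Type*} [NormedAddCommGroup E]
    [NormedSpace ℝ E] [CompleteSpace E] [NormedAddCommGroup F] [NormedSpace ℝ F] {μ ν ρ : ℝ}
    {κ : ℝ≥0} (hν : 0 ≤ ν) (hνμ : ν < μ) (hρμ : ρ < μ) (hκ₀ : 0 < κ) (hκ : κ ≤ 1 / 3) :
    ∃ εstar c : ℝ, 0 < εstar ∧ c ∈ Ioo 0 1 ∧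
      ∀ ε : ℝ≥0, ε < εstar → ∀ r r' : ℝ, 0 < r → 0 ≤ r' → r' ≤ ρ * r →
      ∀ (A : E ≃L[ℝ] E) (B : F →L[ℝ] F) (f : E × F → E × F),
        IsHyperbolicPerturbation A B μ ν ε r f → IsC1LipOn f (closedBall 0 r) →
        (∀ g : E → F, IsC1LipOn g (closedBall 0 r) → LipschitzOnWith κ g (closedBall 0 r) →
          (∃ z ∈ (closedBall 0 r).graphOn g,
            z ∈ closedBall 0 (r / 2) ∧ f z ∈ closedBall 0 (r' / 2)) →
          IsTransformedGraph f κ r r' g (graphTransform f (closedBall 0 r) g)) ∧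
        (∀ g₁ g₂ : E → F, IsC1LipOn g₁ (closedBall 0 r) → IsC1LipOn g₂ (closedBall 0 r) →
          LipschitzOnWith κ g₁ (closedBall 0 r) → LipschitzOnWith κ g₂ (closedBall 0 r) →
          g₁ 0 = 0 → g₂ 0 = 0 →
          IsTransformedGraph f κ r r' g₁ (graphTransform f (closedBall 0 r) g₁) ∧
          IsTransformedGraph f κ r r' g₂ (graphTransform f (closedBall 0 r) g₂) ∧
          graphTransform f (closedBall 0 r) g₁ 0 = 0 ∧
          graphTransform f (closedBall 0 r) g₂ 0 = 0 ∧
          ∀ b : ℝ, 0 ≤ b → (∀ u ∈ closedBall 0 r, ‖g₁ u - g₂ u‖ ≤ b * ‖u‖) →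
            ∀ w ∈ closedBall 0 r',
              ‖graphTransform f (closedBall 0 r) g₁ w - graphTransform f (closedBall 0 r) g₂ w‖ ≤
                c * b * ‖w‖) := by
  obtain ⟨εstar, c, hεstar, hc, hsmall⟩ :=
    exists_smallness_constants hν hνμ hρμ (NNReal.coe_pos.2 hκ₀) (mod_cast hκ)
  refine ⟨εstar, c, hεstar, hc, fun ε hε r r' hr hr' hρ A B f hf hf1 => ?_⟩
  obtain ⟨hεμ, hcone, hρε, hcε⟩ := hsmall ε ε.2 hε
  have hκ1 : κ ≤ 1 := hκ.trans (by bound)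
  have hradius : r' + 2 * ε * r ≤ μ * r :=
    calc r' + 2 * ε * r ≤ ρ * r + 2 * ε * r := by gcongr
      _ = (ρ + 2 * ε) * r := by ring
      _ ≤ μ * r := by gcongr
  have hexists : ∀ {g : E → F}, IsC1LipOn g (closedBall 0 r) →
      LipschitzOnWith κ g (closedBall 0 r) → ∀ u, (u, g u) ∈ closedBall 0 (r / 2) →
      f (u, g u) ∈ closedBall 0 (r' / 2) →
      IsTransformedGraph f κ r r' g (graphTransform f (closedBall 0 r) g) := fun hg1 hg _ hu hfu =>
    hf.isTransformedGraph_graphTransform hν hκ hεμ hcone hr hradius hf1 hg1 hg hu hfu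
  refine ⟨fun g hg1 hg ⟨_, ⟨u, _, huz⟩, hz, hfz⟩ => ?_, fun g₁ g₂ hg₁1 hg₂1 hg₁ hg₂ hg₁0 hg₂0 => ?_⟩
  · subst huz
    exact hexists hg1 hg u hz hfz
  · have hcross : ∀ {g : E → F}, g 0 = 0 → (0, g 0) ∈ closedBall (0 : E × F) (r / 2) ∧
        f (0, g 0) ∈ closedBall 0 (r' / 2) := fun hg0 => by
      rw [hg0, Prod.mk_zero_zero, hf.map_zero]
      exact ⟨mem_closedBall_self (by linarith), mem_closedBall_self (by linarith)⟩
    have hadm₁ : IsAdmissible κ r g₁ := .of_mem_closedBall_half hκ hg₁ (hcross hg₁0).1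
    have hadm₂ : IsAdmissible κ r g₂ := .of_mem_closedBall_half hκ hg₂ (hcross hg₂0).1
    refine ⟨hexists hg₁1 hg₁ 0 (hcross hg₁0).1 (hcross hg₁0).2,
      hexists hg₂1 hg₂ 0 (hcross hg₂0).1 (hcross hg₂0).2,
      hf.graphTransform_zero hκ1 hεμ hr.le hadm₁ hg₁0,
      hf.graphTransform_zero hκ1 hεμ hr.le hadm₂ hg₂0, fun b hb hgb w hw => ?_⟩
    refine (hf.norm_graphTransform_sub_le hν hκ1 hεμ hcone hadm₁ hadm₂
      (hf.surjOn_baseMap hκ1 hεμ hr.le hradius hadm₁)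
      (hf.surjOn_baseMap hκ1 hεμ hr.le hradius hadm₂) hg₂0 hb hgb hw).trans ?_
    gcongr

section EuclideanCharts

variable {du dcs : ℕ} {r r' K a lam δ0 ℓ δ : ℝ} {f : PSp du dcs → PSp du dcs}
  {Df : PSp du dcs → (PSp du dcs →L[ℝ] PSp du dcs)} {g ghat : EuSp du → CsSp dcs}
  {Dg : EuSp du → (EuSp du →L[ℝ] CsSp dcs)}

lemma uGraph_eq_graphOn : uGraph du dcs r g = (closedBall 0 r).graphOn g := by
  ext ⟨u, v⟩
  simp only [uGraph, mem_ofPred_eq, mem_graphOn, eq_comm]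

lemma IsC1LipGraph.isC1LipOn (hg : IsC1LipGraph du dcs r K a g Dg) :
    IsC1LipOn g (closedBall 0 r) :=
  ⟨Dg, hg.hasDeriv, _, hg.lipDeriv⟩

lemma IsTransformedGraph.exists_isC1LipGraph
    (h : IsTransformedGraph f K.toNNReal r r' g ghat) :
    ∃ (Dghat : EuSp du → (EuSp du →L[ℝ] CsSp dcs)) (a' : ℝ), 0 ≤ a' ∧
      IsC1LipGraph du dcs r' K a' ghat Dghat ∧
      uGraph du dcs r' ghat ⊆ f '' uGraph du dcs r g ∩ closedBall 0 r' := by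
  obtain ⟨Dghat, hDghat, L, hL⟩ := h.isC1LipOn
  refine ⟨Dghat, L, L.2, ⟨hDghat, h.lip, by rwa [Real.toNNReal_coe]⟩, ?_⟩
  simpa only [uGraph_eq_graphOn] using h.graphOn_subset

lemma IsChartMap.isC1LipOn (hf : IsChartMap du dcs lam δ0 ℓ δ f Df) :
    IsC1LipOn f (closedBall 0 (δ / ℓ)) :=
  ⟨Df, hf.hasDeriv, _, hf.lipDeriv⟩

lemma IsChartMap.exists_isHyperbolicPerturbation (hδ : 0 < δ)
    (hf : IsChartMap du dcs lam δ0 ℓ δ f Df) :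
    ∃ (A : EuSp du ≃L[ℝ] EuSp du) (B : CsSp dcs →L[ℝ] CsSp dcs),
      IsHyperbolicPerturbation A B (Real.exp lam) (Real.exp δ0) δ.toNNReal (δ / ℓ) f := by
  let A₀ : EuSp du →L[ℝ] EuSp du := .fst ℝ _ _ ∘L Df 0 ∘L .inl ℝ _ _
  let B : CsSp dcs →L[ℝ] CsSp dcs := .snd ℝ _ _ ∘L Df 0 ∘L .inr ℝ _ _
  have hA₀ : ∀ u, Df 0 (u, 0) = (A₀ u, 0) := fun u => Prod.ext rfl (hf.deriv_zero_mapsU u)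
  have hB : ∀ v, Df 0 (0, v) = (0, B v) := fun v => Prod.ext (hf.deriv_zero_mapsCs v) rfl
  have hsplit : Df 0 = A₀.prodMap B := by
    ext1
    · ext1 u; simp [hA₀]
    · ext1 v; simp [hB]
  have hexpand : ∀ u, Real.exp lam * ‖u‖ ≤ ‖A₀ u‖ := fun u => by
    simpa [hA₀, Prod.norm_def] using hf.expand u
  have hinj : Function.Injective A₀ := (injective_iff_map_eq_zero A₀).2 fun u hu => by
    have h := hexpand u
    rw [hu, norm_zero] at h
    exact norm_le_zero_iff.1 (nonpos_of_mul_nonpos_right h (Real.exp_pos lam))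
  refine ⟨(LinearEquiv.ofInjectiveEndo A₀.toLinearMap hinj).toContinuousLinearEquiv, B,
    hf.map_zero, hexpand, fun v => ?_, ?_⟩
  · simpa [hB, Prod.norm_def] using hf.contract v
  · exact hsplit ▸ LipschitzOnWith.approximatesLinearOn (hf.lip_nonlinear δ hδ le_rfl)

end EuclideanCharts

lemma div_le_exp_mul_div {δ ℓ ℓ' t : ℝ} (hδ : 0 ≤ δ) (hℓ : 0 < ℓ) (hℓ' : 0 < ℓ')
    (h : Real.exp (-t) ≤ ℓ' / ℓ) : δ / ℓ' ≤ Real.exp t * (δ / ℓ) := by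
  have hinv : ℓ / ℓ' ≤ Real.exp t := by
    rw [← inv_div, ← neg_neg t, Real.exp_neg]
    exact inv_anti₀ (Real.exp_pos _) h
  calc δ / ℓ' = ℓ / ℓ' * (δ / ℓ) := by field_simp
    _ ≤ Real.exp t * (δ / ℓ) := by gcongr

/-- Existence and contraction of the graph transform (Lemma 2.6): (a) a Lipschitz graph
crossing the chart transforms to a full graph over the next chart; (b) for graphs
through `0` the transform contracts the norm `|h|' = sup ‖h u‖ / ‖u‖` by a factor
`c < 1` independent of the chart. -/
theorem graph_transform_exists_and_contracts
    (du dcs : ℕ) (hdu : 1 ≤ du) (hdcs : 1 ≤ dcs)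
    (lam δ0 δ2 : ℝ) (hlam : 0 < lam) (hδ0 : 0 ≤ δ0) (hδ2 : 0 ≤ δ2)
    (hsmall : δ0 + δ2 < lam / 4) :
    ∃ δstar c : ℝ, 0 < δstar ∧ c ∈ Set.Ioo (0 : ℝ) 1 ∧
      ∀ δ : ℝ, 0 < δ → δ < δstar →
      ∀ ℓ ℓ' : ℝ, 1 ≤ ℓ → 1 ≤ ℓ' →
        Real.exp (-δ2) ≤ ℓ' / ℓ → ℓ' / ℓ ≤ Real.exp δ2 →
      ∀ (f : PSp du dcs → PSp du dcs)
        (Df : PSp du dcs → (PSp du dcs →L[ℝ] PSp du dcs)),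
        IsChartMap du dcs lam δ0 ℓ δ f Df →
        -- (a) existence of the graph transform
        ((∀ (g : EuSp du → CsSp dcs) (Dg : EuSp du → (EuSp du →L[ℝ] CsSp dcs)) (a : ℝ),
            0 ≤ a →
            IsC1LipGraph du dcs (δ / ℓ) (1 / 10) a g Dg →
            (∃ z ∈ uGraph du dcs (δ / ℓ) g,
              z ∈ closedBall (0 : PSp du dcs) (δ / (2 * ℓ)) ∧
              f z ∈ closedBall (0 : PSp du dcs) (δ / (2 * ℓ'))) →
            ∃ (ghat : EuSp du → CsSp dcs) (Dghat : EuSp du → (EuSp du →L[ℝ] CsSp dcs))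
              (a' : ℝ), 0 ≤ a' ∧
              IsC1LipGraph du dcs (δ / ℓ') (1 / 10) a' ghat Dghat ∧
              uGraph du dcs (δ / ℓ') ghat ⊆
                (f '' uGraph du dcs (δ / ℓ) g) ∩ closedBall (0 : PSp du dcs) (δ / ℓ')) ∧
        -- (b) contraction for graphs through the origin
        (∀ (g1 g2 : EuSp du → CsSp dcs)
           (Dg1 Dg2 : EuSp du → (EuSp du →L[ℝ] CsSp dcs)) (a1 a2 : ℝ),
            0 ≤ a1 → 0 ≤ a2 →
            IsC1LipGraph du dcs (δ / ℓ) (1 / 10) a1 g1 Dg1 →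
            IsC1LipGraph du dcs (δ / ℓ) (1 / 10) a2 g2 Dg2 →
            g1 0 = 0 → g2 0 = 0 →
            ∃ (gh1 gh2 : EuSp du → CsSp dcs)
              (Dgh1 Dgh2 : EuSp du → (EuSp du →L[ℝ] CsSp dcs)) (a1' a2' : ℝ),
              0 ≤ a1' ∧ 0 ≤ a2' ∧
              IsC1LipGraph du dcs (δ / ℓ') (1 / 10) a1' gh1 Dgh1 ∧
              IsC1LipGraph du dcs (δ / ℓ') (1 / 10) a2' gh2 Dgh2 ∧
              uGraph du dcs (δ / ℓ') gh1 ⊆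
                (f '' uGraph du dcs (δ / ℓ) g1) ∩ closedBall (0 : PSp du dcs) (δ / ℓ') ∧
              uGraph du dcs (δ / ℓ') gh2 ⊆
                (f '' uGraph du dcs (δ / ℓ) g2) ∩ closedBall (0 : PSp du dcs) (δ / ℓ') ∧
              gh1 0 = 0 ∧ gh2 0 = 0 ∧
              ∀ b : ℝ, 0 ≤ b →
                (∀ u ∈ closedBall (0 : EuSp du) (δ / ℓ), ‖g1 u - g2 u‖ ≤ b * ‖u‖) →
                ∀ u ∈ closedBall (0 : EuSp du) (δ / ℓ'),
                  ‖gh1 u - gh2 u‖ ≤ c * b * ‖u‖)) := by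
  obtain ⟨δstar, c, hδstar, hc, htransform⟩ := graph_transform_exists_and_contracts_general
    (E := EuSp du) (F := CsSp dcs) (μ := Real.exp lam) (ρ := Real.exp δ2)
    (κ := (1 / 10 : ℝ).toNNReal) (Real.exp_nonneg δ0) (Real.exp_lt_exp.2 (by linarith))
    (Real.exp_lt_exp.2 (by linarith)) (by simp) (Real.toNNReal_le_iff_le_coe.2 (by norm_num))
  refine ⟨δstar, c, hδstar, hc, fun δ hδ hδs ℓ ℓ' hℓ hℓ' hratio _ f Df hf => ?_⟩
  obtain ⟨A, B, hAB⟩ := hf.exists_isHyperbolicPerturbation hδ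
  obtain ⟨hexists, hcontract⟩ := htransform δ.toNNReal (by rwa [Real.coe_toNNReal δ hδ.le])
    (δ / ℓ) (δ / ℓ') (by positivity) (by positivity)
    (div_le_exp_mul_div hδ.le (by positivity) (by positivity) hratio) A B f hAB hf.isC1LipOn
  refine ⟨fun g Dg a _ hg hz => ?_, fun g1 g2 Dg1 Dg2 a1 a2 _ _ hg1 hg2 hg10 hg20 => ?_⟩
  · simp only [uGraph_eq_graphOn, div_mul_eq_div_div_swap] at hz
    exact ⟨_, (hexists g hg.isC1LipOn hg.lip hz).exists_isC1LipGraph⟩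
  · obtain ⟨hT1, hT2, hT10, hT20, hlt⟩ :=
      hcontract g1 g2 hg1.isC1LipOn hg2.isC1LipOn hg1.lip hg2.lip hg10 hg20
    obtain ⟨Dgh1, a1', ha1', hgh1, hsub1⟩ := hT1.exists_isC1LipGraph
    obtain ⟨Dgh2, a2', ha2', hgh2, hsub2⟩ := hT2.exists_isC1LipGraph
    exact ⟨_, _, Dgh1, Dgh2, a1', a2', ha1', ha2', hgh1, hgh2, hsub1, hsub2, hT10, hT20, hlt⟩
end
end
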